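/- For every c > 0 there exist constants N > 0 and C > 0 such that for all ν ≥ N, every positive integer k, and every j that is the k-th positive zero of J_ν with ν < j < (1+c)ν, one has | j·g(ν/j) − (k − 1/4) | ≤ C/k. -/

import Mathlib

open Real MeasureTheory Set

/-- The Bessel function of the first kind of order `ν ≥ 0`, for `x > 0`, via the
integral representation. -/
noncomputable def besselJ (ν x : ℝ) : ℝ :=
  (1 / π) * (∫ θ in (0:ℝ)..π, Real.cos (x * Real.sin θ - ν * θ)) -
    (Real.sin (ν * π) / π) * ∫ t in Set.Ioi (0:ℝ), Real.exp (-x * Real.sinh t - ν * t)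

/-- The function `g(t) = (√(1-t²) - t arccos t)/π`. -/
noncomputable def gfun (t : ℝ) : ℝ := (Real.sqrt (1 - t ^ 2) - t * Real.arccos t) / π

/-- `j` is the `k`-th positive zero of `J_ν`: `j > 0`, `J_ν(j) = 0`, and there are exactly
`k - 1` zeros of `J_ν` in `(0, j)`. -/
def IsKthZero (ν : ℝ) (k : ℕ) (j : ℝ) : Prop :=
  0 < j ∧ besselJ ν j = 0 ∧ {x : ℝ | 0 < x ∧ x < j ∧ besselJ ν x = 0}.ncard = k - 1


/-! ### Part 1: the functions and the Bessel equation -/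

open Filter Topology

/-- Moments of the exponentially decaying integrals. -/
noncomputable def Kint (n : ℕ) (μ x : ℝ) : ℝ :=
  ∫ t in Set.Ioi (0:ℝ), Real.sinh t ^ n * Real.exp (-x * Real.sinh t + μ * t)

lemma sinh_quad {t : ℝ} (ht : 0 ≤ t) : t ^ 2 / 4 ≤ Real.sinh t := by
  have h1 := Real.quadratic_le_exp_of_nonneg ht
  have h2 : Real.exp (-t) ≤ 1 := Real.exp_le_one_iff.mpr (by linarith)
  rw [Real.sinh_eq]
  linarith

lemma sinh_ge_self {t : ℝ} (ht : 0 ≤ t) : t ≤ Real.sinh t := Real.self_le_sinh_iff.mpr ht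

lemma Kint_bound (n : ℕ) (μ : ℝ) {x : ℝ} (hx : 0 < x) : ∃ C : ℝ, 0 ≤ C ∧ ∀ t : ℝ, 0 ≤ t →
    Real.sinh t ^ n * Real.exp (-x * Real.sinh t + μ * t) ≤ C * Real.exp (-t) := by
  refine ⟨(n.factorial / (x/2)^n) * Real.exp (2 * (μ + 1) ^ 2 / x), by positivity, ?_⟩
  intro t ht
  have hs : 0 ≤ Real.sinh t := Real.sinh_nonneg_iff.mpr ht
  have h1 : (x / 2 * Real.sinh t) ^ n / n.factorial ≤ Real.exp (x / 2 * Real.sinh t) :=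
    Real.pow_div_factorial_le_exp _ (by positivity) n
  have h2 : Real.sinh t ^ n ≤ (n.factorial / (x/2)^n) * Real.exp (x / 2 * Real.sinh t) := by
    rw [div_le_iff₀ (by positivity), mul_pow] at h1
    rw [div_mul_eq_mul_div, le_div_iff₀ (by positivity)]
    linarith
  have h3 : Real.exp (x / 2 * Real.sinh t) * Real.exp (-x * Real.sinh t + μ * t) ≤
      Real.exp (2 * (μ + 1) ^ 2 / x) * Real.exp (-t) := by
    rw [← Real.exp_add, ← Real.exp_add]
    apply Real.exp_le_exp.mpr
    have h4 := sinh_quad ht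
    have h5 : (μ + 1) * t - x / 8 * t ^ 2 ≤ 2 * (μ + 1) ^ 2 / x := by
      rw [le_div_iff₀ hx]
      nlinarith [sq_nonneg (x * t - 4 * (μ + 1))]
    nlinarith
  calc _ ≤ ((n.factorial / (x/2)^n) * Real.exp (x / 2 * Real.sinh t)) *
        Real.exp (-x * Real.sinh t + μ * t) := by gcongr
    _ = (n.factorial / (x/2)^n) * (Real.exp (x / 2 * Real.sinh t) *
        Real.exp (-x * Real.sinh t + μ * t)) := by ring
    _ ≤ (n.factorial / (x/2)^n) * (Real.exp (2 * (μ + 1) ^ 2 / x) * Real.exp (-t)) := by gcongr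
    _ = _ := by ring

lemma Kint_integrable (n : ℕ) (μ : ℝ) {x : ℝ} (hx : 0 < x) :
    IntegrableOn (fun t => Real.sinh t ^ n * Real.exp (-x * Real.sinh t + μ * t)) (Ioi 0) := by
  obtain ⟨C, hC, h⟩ := Kint_bound n μ hx
  apply integrable_of_isBigO_exp_neg (b := 1) one_pos
  · apply Continuous.continuousOn
    fun_prop
  · apply Asymptotics.IsBigO.of_bound C
    filter_upwards [eventually_ge_atTop 0] with t ht
    have hs : 0 ≤ Real.sinh t := Real.sinh_nonneg_iff.mpr ht
    rw [Real.norm_of_nonneg (by positivity), Real.norm_of_nonneg (by positivity)]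
    simpa using h t ht

lemma Kint_hasDerivAt (n : ℕ) (μ : ℝ) {x : ℝ} (hx : 0 < x) :
    HasDerivAt (Kint n μ) (-Kint (n+1) μ x) x := by
  have key := hasDerivAt_integral_of_dominated_loc_of_deriv_le
    (μ := volume.restrict (Ioi (0:ℝ)))
    (F := fun x t => Real.sinh t ^ n * Real.exp (-x * Real.sinh t + μ * t))
    (F' := fun x t => -(Real.sinh t ^ (n+1) * Real.exp (-x * Real.sinh t + μ * t)))
    (x₀ := x) (s := Ioi (x/2))
    (bound := fun t => Real.sinh t ^ (n+1) * Real.exp (-(x/2) * Real.sinh t + μ * t))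
    (Ioi_mem_nhds (by linarith))
    (by
      refine Eventually.of_forall fun y => ?_
      apply Continuous.aestronglyMeasurable
      fun_prop)
    (Kint_integrable n μ hx)
    (by
      apply Continuous.aestronglyMeasurable
      fun_prop)
    (by
      filter_upwards [ae_restrict_mem measurableSet_Ioi] with t ht y hy
      have ht0 : 0 ≤ t := le_of_lt ht
      have hs : 0 ≤ Real.sinh t := Real.sinh_nonneg_iff.mpr ht0
      have hy' : x / 2 < y := hy
      rw [norm_neg, Real.norm_of_nonneg (by positivity)]
      gcongr)
    (Kint_integrable (n+1) μ (by linarith))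
    (by
      refine Eventually.of_forall fun t y _ => ?_
      have h1 : HasDerivAt (fun y : ℝ => -y * Real.sinh t + μ * t) (-Real.sinh t) y := by
        simpa using (((hasDerivAt_id y).neg.mul_const (Real.sinh t)).add_const (μ * t))
      exact (h1.exp.const_mul (Real.sinh t ^ n)).congr_deriv (by ring))
  have h2 := key.2
  rw [integral_neg] at h2
  exact h2

lemma Kint_ode (μ : ℝ) {x : ℝ} (hx : 0 < x) :
    x ^ 2 * Kint 2 μ x - x * Kint 1 μ x + (x ^ 2 - μ ^ 2) * Kint 0 μ x = x + μ := by
  have i0 := Kint_integrable 0 μ hx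
  have i1 := Kint_integrable 1 μ hx
  have i2 := Kint_integrable 2 μ hx
  have hd : ∀ t : ℝ, HasDerivAt
      (fun t => -((x * Real.cosh t + μ) * Real.exp (-x * Real.sinh t + μ * t)))
      (x ^ 2 * (Real.sinh t ^ 2 * Real.exp (-x * Real.sinh t + μ * t))
       - x * (Real.sinh t ^ 1 * Real.exp (-x * Real.sinh t + μ * t))
       + (x ^ 2 - μ ^ 2) * (Real.sinh t ^ 0 * Real.exp (-x * Real.sinh t + μ * t))) t := by
    intro t
    have h1 : HasDerivAt (fun t : ℝ => -x * Real.sinh t + μ * t) (-x * Real.cosh t + μ) t := by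
      exact (((Real.hasDerivAt_sinh t).const_mul (-x)).add
        ((hasDerivAt_id t).const_mul μ)).congr_deriv (by simp)
    have h2 : HasDerivAt (fun t : ℝ => x * Real.cosh t + μ) (x * Real.sinh t) t :=
      ((Real.hasDerivAt_cosh t).const_mul x).add_const μ
    refine (h2.mul h1.exp).neg.congr_deriv ?_
    have := Real.cosh_sq t
    simp only [pow_zero, pow_one, one_mul]
    linear_combination ((x ^ 2) * Real.exp (-x * Real.sinh t + μ * t)) * this
  have hIntg := ((i2.const_mul (x^2)).sub (i1.const_mul x)).add (i0.const_mul (x ^ 2 - μ ^ 2))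
  have hlim : Tendsto (fun t => -((x * Real.cosh t + μ) * Real.exp (-x * Real.sinh t + μ * t)))
      atTop (𝓝 0) := by
    obtain ⟨C0, hC0, h0⟩ := Kint_bound 0 μ hx
    obtain ⟨C1, hC1, h1⟩ := Kint_bound 1 μ hx
    have hz : Tendsto (fun t : ℝ => (x * (C1 + C0) + |μ| * C0) * Real.exp (-t)) atTop (𝓝 0) := by
      simpa using Real.tendsto_exp_neg_atTop_nhds_zero.const_mul (x * (C1 + C0) + |μ| * C0)
    apply squeeze_zero_norm' _ hz
    filter_upwards [eventually_ge_atTop 0] with t ht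
    have a0 := h0 t ht
    have a1 := h1 t ht
    have hs : 0 ≤ Real.sinh t := Real.sinh_nonneg_iff.mpr ht
    have hc : Real.cosh t ≤ Real.sinh t + 1 := by
      have := Real.cosh_sub_sinh t
      have h2 : Real.exp (-t) ≤ 1 := Real.exp_le_one_iff.mpr (by linarith)
      linarith
    have hcp := Real.cosh_pos t
    set e := Real.exp (-x * Real.sinh t + μ * t) with he
    have hep : 0 < e := Real.exp_pos _
    rw [norm_neg, norm_mul, Real.norm_of_nonneg hep.le]
    simp only [pow_zero, pow_one, one_mul] at a0 a1
    have h3 : ‖x * Real.cosh t + μ‖ ≤ x * (Real.sinh t + 1) + |μ| := by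
      refine (norm_add_le _ _).trans ?_
      rw [Real.norm_of_nonneg (by positivity), Real.norm_eq_abs]
      gcongr
    calc _ ≤ (x * (Real.sinh t + 1) + |μ|) * e := by gcongr
      _ = x * (Real.sinh t * e + e) + |μ| * e := by ring
      _ ≤ x * (C1 * Real.exp (-t) + C0 * Real.exp (-t)) + |μ| * (C0 * Real.exp (-t)) := by
        gcongr
      _ = _ := by ring
  have hftc := integral_Ioi_of_hasDerivAt_of_tendsto' (a := 0) (fun t _ => hd t) hIntg hlim
  have hL : (∫ t in Ioi (0:ℝ), (x ^ 2 * (Real.sinh t ^ 2 * Real.exp (-x * Real.sinh t + μ * t))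
       - x * (Real.sinh t ^ 1 * Real.exp (-x * Real.sinh t + μ * t))
       + (x ^ 2 - μ ^ 2) * (Real.sinh t ^ 0 * Real.exp (-x * Real.sinh t + μ * t))))
      = x ^ 2 * Kint 2 μ x - x * Kint 1 μ x + (x ^ 2 - μ ^ 2) * Kint 0 μ x := by
    rw [integral_add, integral_sub, integral_const_mul, integral_const_mul, integral_const_mul]
    · rfl
    · exact i2.const_mul _
    · exact i1.const_mul _
    · exact (i2.const_mul (x^2)).sub (i1.const_mul x)
    · exact i0.const_mul _
  rw [← hL, hftc]
  simp

/-- Moments of the oscillating integral. -/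
noncomputable def Mint (n : ℕ) (ν x : ℝ) : ℂ :=
  ∫ θ in (0:ℝ)..π, (Complex.I * (Real.sin θ : ℂ)) ^ n *
    Complex.exp (Complex.I * ((x * Real.sin θ - ν * θ : ℝ) : ℂ))

lemma norm_exp_I_real (y : ℝ) : ‖Complex.exp (Complex.I * (y : ℂ))‖ = 1 := by
  rw [mul_comm]; exact Complex.norm_exp_ofReal_mul_I y

lemma Mint_cont (n : ℕ) (ν x : ℝ) : Continuous fun θ : ℝ =>
    (Complex.I * (Real.sin θ : ℂ)) ^ n *
    Complex.exp (Complex.I * ((x * Real.sin θ - ν * θ : ℝ) : ℂ)) := by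
  fun_prop

lemma Mint_hasDerivAt (n : ℕ) (ν x : ℝ) :
    HasDerivAt (Mint n ν) (Mint (n+1) ν x) x := by
  have key := intervalIntegral.hasDerivAt_integral_of_dominated_loc_of_deriv_le
    (μ := volume) (a := 0) (b := π)
    (F := fun (x θ : ℝ) => (Complex.I * (Real.sin θ : ℂ)) ^ n *
      Complex.exp (Complex.I * ((x * Real.sin θ - ν * θ : ℝ) : ℂ)))
    (F' := fun (x θ : ℝ) => (Complex.I * (Real.sin θ : ℂ)) ^ (n+1) *
      Complex.exp (Complex.I * ((x * Real.sin θ - ν * θ : ℝ) : ℂ)))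
    (x₀ := x) (s := univ) (bound := fun _ => 1)
    univ_mem
    (Eventually.of_forall fun y => (Mint_cont n ν y).aestronglyMeasurable)
    ((Mint_cont n ν x).intervalIntegrable _ _)
    ((Mint_cont (n+1) ν x).aestronglyMeasurable)
    (by
      refine Eventually.of_forall fun t _ y _ => ?_
      rw [norm_mul, norm_exp_I_real, mul_one, norm_pow, norm_mul, Complex.norm_I, one_mul,
        Complex.norm_real]
      exact pow_le_one₀ (norm_nonneg _) (Real.abs_sin_le_one t))
    (by simp)
    (by
      refine Eventually.of_forall fun t _ y _ => ?_
      have h1 : HasDerivAt (fun y : ℝ => y * Real.sin t - ν * t) (Real.sin t) y := by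
        simpa using (((hasDerivAt_id y).mul_const (Real.sin t)).sub_const (ν * t))
      have h2 := (h1.ofReal_comp.const_mul Complex.I).cexp.const_mul
        ((Complex.I * (Real.sin t : ℂ)) ^ n)
      exact h2.congr_deriv (by ring))
  exact key.2

lemma Mint_ode (ν x : ℝ) :
    (x:ℂ) ^ 2 * Mint 2 ν x + x * Mint 1 ν x + ((x:ℂ) ^ 2 - (ν:ℂ) ^ 2) * Mint 0 ν x =
      -Complex.I * ((ν - x) * Complex.exp (-Complex.I * (ν * π)) - (x + ν)) := by
  have hd : ∀ t : ℝ, HasDerivAt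
      (fun t : ℝ => -Complex.I * ((x * Real.cos t + ν : ℝ) : ℂ) *
        Complex.exp (Complex.I * ((x * Real.sin t - ν * t : ℝ) : ℂ)))
      ((x:ℂ) ^ 2 * ((Complex.I * (Real.sin t : ℂ)) ^ 2 *
          Complex.exp (Complex.I * ((x * Real.sin t - ν * t : ℝ) : ℂ)))
       + x * ((Complex.I * (Real.sin t : ℂ)) ^ 1 *
          Complex.exp (Complex.I * ((x * Real.sin t - ν * t : ℝ) : ℂ)))
       + ((x:ℂ) ^ 2 - (ν:ℂ) ^ 2) * ((Complex.I * (Real.sin t : ℂ)) ^ 0 *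
          Complex.exp (Complex.I * ((x * Real.sin t - ν * t : ℝ) : ℂ)))) t := by
    intro t
    have h1 : HasDerivAt (fun t : ℝ => x * Real.sin t - ν * t) (x * Real.cos t - ν) t := by
      exact (((Real.hasDerivAt_sin t).const_mul x).sub
        ((hasDerivAt_id t).const_mul ν)).congr_deriv (by simp)
    have h2 : HasDerivAt (fun t : ℝ => x * Real.cos t + ν) (x * -Real.sin t) t :=
      ((Real.hasDerivAt_cos t).const_mul x).add_const ν
    refine ((h2.ofReal_comp.const_mul (-Complex.I)).mul
      (h1.ofReal_comp.const_mul Complex.I).cexp).congr_deriv ?_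
    have h3 : ((Real.sin t : ℝ) : ℂ) ^ 2 + ((Real.cos t : ℝ) : ℂ) ^ 2 = 1 := by
      exact_mod_cast Real.sin_sq_add_cos_sq t
    have h4 : Complex.I ^ 2 = -1 := Complex.I_sq
    generalize Complex.exp (Complex.I * ((x * Real.sin t - ν * t : ℝ) : ℂ)) = e
    push_cast
    push_cast at h3
    linear_combination ((x:ℂ) ^ 2 * e) * h3 -
      ((x:ℂ)^2 * Complex.sin t ^ 2 * e + e * (x * Complex.cos t + ν) * (x * Complex.cos t - ν)) * h4
  have hftc := intervalIntegral.integral_eq_sub_of_hasDerivAt (a := 0) (b := π)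
    (fun t _ => hd t) (by apply Continuous.intervalIntegrable; fun_prop)
  rw [intervalIntegral.integral_add, intervalIntegral.integral_add,
    intervalIntegral.integral_const_mul, intervalIntegral.integral_const_mul,
    intervalIntegral.integral_const_mul] at hftc
  · have e : (x:ℂ) ^ 2 * Mint 2 ν x + x * Mint 1 ν x + ((x:ℂ) ^ 2 - (ν:ℂ) ^ 2) * Mint 0 ν x = _ :=
      hftc
    rw [e]
    simp
    ring_nf
  all_goals (apply Continuous.intervalIntegrable; fun_prop)

/-- The Hankel-type combination and its derivatives. -/
noncomputable def A0 (ν x : ℝ) : ℂ :=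
  Kint 0 ν x + Complex.I * Mint 0 ν x + Complex.exp (-Complex.I * (ν * π)) * Kint 0 (-ν) x
noncomputable def A1 (ν x : ℝ) : ℂ :=
  -Kint 1 ν x + Complex.I * Mint 1 ν x - Complex.exp (-Complex.I * (ν * π)) * Kint 1 (-ν) x
noncomputable def A2 (ν x : ℝ) : ℂ :=
  Kint 2 ν x + Complex.I * Mint 2 ν x + Complex.exp (-Complex.I * (ν * π)) * Kint 2 (-ν) x

lemma A0_hasDerivAt (ν : ℝ) {x : ℝ} (hx : 0 < x) : HasDerivAt (A0 ν) (A1 ν x) x := by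
  have h := ((Kint_hasDerivAt 0 ν hx).ofReal_comp.add
    ((Mint_hasDerivAt 0 ν x).const_mul Complex.I)).add
    ((Kint_hasDerivAt 0 (-ν) hx).ofReal_comp.const_mul (Complex.exp (-Complex.I * (ν * π))))
  exact h.congr_deriv (by simp [A1]; ring)

lemma A1_hasDerivAt (ν : ℝ) {x : ℝ} (hx : 0 < x) : HasDerivAt (A1 ν) (A2 ν x) x := by
  have h := ((Kint_hasDerivAt 1 ν hx).ofReal_comp.neg.add
    ((Mint_hasDerivAt 1 ν x).const_mul Complex.I)).sub
    ((Kint_hasDerivAt 1 (-ν) hx).ofReal_comp.const_mul (Complex.exp (-Complex.I * (ν * π))))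
  exact h.congr_deriv (by simp [A2])

lemma A_ode (ν : ℝ) {x : ℝ} (hx : 0 < x) :
    (x:ℂ) ^ 2 * A2 ν x + x * A1 ν x + ((x:ℂ) ^ 2 - (ν:ℂ) ^ 2) * A0 ν x = 0 := by
  have h1 : (x:ℂ) ^ 2 * Kint 2 ν x - x * Kint 1 ν x + ((x:ℂ) ^ 2 - (ν:ℂ) ^ 2) * Kint 0 ν x
      = x + ν := by exact_mod_cast Kint_ode ν hx
  have h2 : (x:ℂ) ^ 2 * Kint 2 (-ν) x - x * Kint 1 (-ν) x
      + ((x:ℂ) ^ 2 - (ν:ℂ) ^ 2) * Kint 0 (-ν) x = x - ν := by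
    have := Kint_ode (-ν) hx
    rw [neg_sq] at this
    rw [sub_eq_add_neg (x:ℂ)]
    exact_mod_cast this
  have h3 := Mint_ode ν x
  have h4 : Complex.I ^ 2 = -1 := Complex.I_sq
  unfold A0 A1 A2
  linear_combination h1 + Complex.exp (-Complex.I * (ν * π)) * h2 + Complex.I * h3
    - ((ν - x) * Complex.exp (-Complex.I * (ν * π)) - (x + ν)) * h4

/-- real functions -/
noncomputable def Jf (ν x : ℝ) : ℝ := (A0 ν x).im
noncomputable def Jf1 (ν x : ℝ) : ℝ := (A1 ν x).im
noncomputable def Yf (ν x : ℝ) : ℝ := (A0 ν x).re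
noncomputable def Yf1 (ν x : ℝ) : ℝ := (A1 ν x).re

lemma hasDerivAt_im {f : ℝ → ℂ} {f' : ℂ} {x : ℝ} (h : HasDerivAt f f' x) :
    HasDerivAt (fun y => (f y).im) f'.im x :=
  (Complex.imCLM.hasFDerivAt.comp_hasDerivAt x h)

lemma hasDerivAt_re {f : ℝ → ℂ} {f' : ℂ} {x : ℝ} (h : HasDerivAt f f' x) :
    HasDerivAt (fun y => (f y).re) f'.re x :=
  (Complex.reCLM.hasFDerivAt.comp_hasDerivAt x h)

lemma Jf_hasDerivAt (ν : ℝ) {x : ℝ} (hx : 0 < x) : HasDerivAt (Jf ν) (Jf1 ν x) x :=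
  hasDerivAt_im (A0_hasDerivAt ν hx)
lemma Yf_hasDerivAt (ν : ℝ) {x : ℝ} (hx : 0 < x) : HasDerivAt (Yf ν) (Yf1 ν x) x :=
  hasDerivAt_re (A0_hasDerivAt ν hx)

lemma A2_eq (ν : ℝ) {x : ℝ} (hx : 0 < x) :
    A2 ν x = ((-1 / x : ℝ) : ℂ) * A1 ν x + (((ν ^ 2 - x ^ 2) / x ^ 2 : ℝ) : ℂ) * A0 ν x := by
  have h := A_ode ν hx
  have hx' : (x:ℂ) ≠ 0 := by exact_mod_cast hx.ne'
  push_cast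
  field_simp
  linear_combination h

lemma Jf1_hasDerivAt (ν : ℝ) {x : ℝ} (hx : 0 < x) :
    HasDerivAt (Jf1 ν) (-1 / x * Jf1 ν x + (ν ^ 2 - x ^ 2) / x ^ 2 * Jf ν x) x := by
  have h := hasDerivAt_im (A1_hasDerivAt ν hx)
  rw [A2_eq ν hx, Complex.add_im, Complex.im_ofReal_mul, Complex.im_ofReal_mul] at h
  exact h

lemma Yf1_hasDerivAt (ν : ℝ) {x : ℝ} (hx : 0 < x) :
    HasDerivAt (Yf1 ν) (-1 / x * Yf1 ν x + (ν ^ 2 - x ^ 2) / x ^ 2 * Yf ν x) x := by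
  have h := hasDerivAt_re (A1_hasDerivAt ν hx)
  rw [A2_eq ν hx, Complex.add_re, Complex.re_ofReal_mul, Complex.re_ofReal_mul] at h
  exact h

lemma Mint0_re (ν x : ℝ) : (Mint 0 ν x).re = ∫ θ in (0:ℝ)..π, Real.cos (x * Real.sin θ - ν * θ) := by
  unfold Mint
  have h := (Complex.reCLM.intervalIntegral_comp_comm
    ((Mint_cont 0 ν x).intervalIntegrable (μ := volume) 0 π))
  simp only [Complex.reCLM_apply] at h
  rw [← h]
  congr 1
  ext θ
  rw [pow_zero, one_mul, mul_comm, Complex.exp_ofReal_mul_I_re]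

lemma Jf_eq (ν x : ℝ) : Jf ν x = (∫ θ in (0:ℝ)..π, Real.cos (x * Real.sin θ - ν * θ))
    - Real.sin (ν * π) * Kint 0 (-ν) x := by
  have h : (Complex.exp (-Complex.I * (ν * π))).im = -Real.sin (ν * π) := by
    have : -Complex.I * ((ν:ℂ) * π) = ((-(ν * π) : ℝ) : ℂ) * Complex.I := by push_cast; ring
    rw [this, Complex.exp_ofReal_mul_I_im, Real.sin_neg]
  unfold Jf A0
  rw [Complex.add_im, Complex.add_im, Complex.im_mul_ofReal, h, Complex.I_mul_im, Mint0_re,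
    Complex.ofReal_im]
  ring

lemma Jf_eq_bessel (ν x : ℝ) : Jf ν x = π * besselJ ν x := by
  rw [Jf_eq, besselJ, Kint]
  have : ∀ t : ℝ, Real.sinh t ^ 0 * Real.exp (-x * Real.sinh t + -ν * t) =
    Real.exp (-x * Real.sinh t - ν * t) := by
    intro t; rw [pow_zero, one_mul]; congr 1; ring
  simp only [this]
  field_simp


/-! ### Part 2: the steepest descent contour -/

/-- The integrand of the contour integral. -/
noncomputable def Ew (ν x : ℝ) (w : ℂ) : ℂ := Complex.exp (x * Complex.sinh w - ν * w)

lemma exists_primitive (ν x : ℝ) : ∃ F : ℂ → ℂ, ∀ w, HasDerivAt F (Ew ν x w) w := by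
  have hd : Differentiable ℂ (Ew ν x) := by
    unfold Ew
    fun_prop
  have h := Complex.IsConservativeOn.isExactOn_univ hd.continuous
    (hd.differentiableOn.isConservativeOn)
  obtain ⟨g, hg⟩ := h
  exact ⟨g, fun w => hg w (mem_univ _)⟩

lemma Ew_arg (ν x u v : ℝ) : (x:ℂ) * Complex.sinh (u + v * Complex.I) - ν * (u + v * Complex.I)
    = ((x * Real.sinh u * Real.cos v - ν * u : ℝ) : ℂ)
      + ((x * Real.cosh u * Real.sin v - ν * v : ℝ) : ℂ) * Complex.I := by
  rw [Complex.sinh_add, Complex.sinh_mul_I, Complex.cosh_mul_I]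
  push_cast
  ring

lemma Ew_norm (ν x u v : ℝ) : ‖Ew ν x (u + v * Complex.I)‖ =
    Real.exp (x * Real.sinh u * Real.cos v - ν * u) := by
  rw [Ew, Ew_arg, Complex.norm_exp]
  congr 1
  rw [Complex.add_re, Complex.re_ofReal_mul, Complex.I_re, Complex.ofReal_re]
  ring

lemma vert_bound {ν x : ℝ} {F : ℂ → ℂ} (hF : ∀ w, HasDerivAt F (Ew ν x w) w) {u a b C y z : ℝ}
    (hC : ∀ v ∈ Icc a b, Real.exp (x * Real.sinh u * Real.cos v - ν * u) ≤ C)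
    (hy : y ∈ Icc a b) (hz : z ∈ Icc a b) :
    ‖F (u + y * Complex.I) - F (u + z * Complex.I)‖ ≤ C * |y - z| := by
  have hd : ∀ v ∈ Icc a b, HasDerivWithinAt (fun v : ℝ => F (u + v * Complex.I))
      (Ew ν x (u + v * Complex.I) * Complex.I) (Icc a b) v := by
    intro v _
    have h1 : HasDerivAt (fun v : ℝ => (u:ℂ) + v * Complex.I) Complex.I v := by
      exact ((((hasDerivAt_id v).ofReal_comp).mul_const Complex.I).const_add (u:ℂ)).congr_deriv
        (by simp)
    exact (HasDerivAt.comp v (hF _) h1).hasDerivWithinAt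
  have := (convex_Icc a b).norm_image_sub_le_of_norm_hasDerivWithin_le hd (C := C)
    (by intro v hv; rw [norm_mul, Complex.norm_I, mul_one, Ew_norm]; exact hC v hv) hz hy
  simpa using this

/-- Limit of a primitive at the left end. -/
lemma F_left {ν x : ℝ} (hx : 0 < x) {F : ℂ → ℂ} (hF : ∀ w, HasDerivAt F (Ew ν x w) w) :
    Tendsto (fun s : ℝ => F (-s)) atTop (𝓝 (F 0 - Kint 0 ν x)) := by
  have hIntg : IntegrableOn (fun t : ℝ => ((Real.sinh t ^ 0 *
      Real.exp (-x * Real.sinh t + ν * t) : ℝ) : ℂ)) (Ioi 0) := (Kint_integrable 0 ν hx).ofReal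
  have h1 := intervalIntegral_tendsto_integral_Ioi (0:ℝ) hIntg tendsto_id
  have hK : (∫ t in Ioi (0:ℝ), ((Real.sinh t ^ 0 *
      Real.exp (-x * Real.sinh t + ν * t) : ℝ) : ℂ)) = (Kint 0 ν x : ℂ) := by
    rw [integral_complex_ofReal]; rfl
  rw [hK] at h1
  have h2 : ∀ s : ℝ, (∫ t in (0:ℝ)..s, ((Real.sinh t ^ 0 *
      Real.exp (-x * Real.sinh t + ν * t) : ℝ) : ℂ)) = F 0 - F (-s) := by
    intro s
    have hd : ∀ t : ℝ, HasDerivAt (fun t : ℝ => -F (-(t:ℂ))) ((Real.sinh t ^ 0 *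
      Real.exp (-x * Real.sinh t + ν * t) : ℝ) : ℂ) t := by
      intro t
      have h3 : HasDerivAt (fun t : ℝ => -(t:ℂ)) (-1) t := by
        exact (((hasDerivAt_id t).ofReal_comp).neg).congr_deriv (by simp)
      refine (HasDerivAt.comp t (hF _) h3).neg.congr_deriv ?_
      simp only [Ew, pow_zero, one_mul, mul_neg, mul_one, neg_neg]
      push_cast
      rw [Complex.sinh_neg]
      congr 1
      ring
    rw [intervalIntegral.integral_eq_sub_of_hasDerivAt (fun t _ => hd t)
      (by apply Continuous.intervalIntegrable; fun_prop)]
    simp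
    ring
  have h3 : (fun s : ℝ => F (-s)) = fun s : ℝ => F 0 - ∫ t in (0:ℝ)..s, ((Real.sinh t ^ 0 *
      Real.exp (-x * Real.sinh t + ν * t) : ℝ) : ℂ) := by
    ext s; rw [h2]; ring
  rw [h3]
  exact h1.const_sub _

/-- Limit of a primitive at the right end. -/
lemma F_right {ν x : ℝ} (hx : 0 < x) {F : ℂ → ℂ} (hF : ∀ w, HasDerivAt F (Ew ν x w) w) :
    Tendsto (fun s : ℝ => F (s + π * Complex.I)) atTop
      (𝓝 (F 0 + Complex.I * Mint 0 ν x
        + Complex.exp (-Complex.I * (ν * π)) * Kint 0 (-ν) x)) := by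
  have hM : Complex.I * Mint 0 ν x = F (π * Complex.I) - F 0 := by
    have hd : ∀ t : ℝ, HasDerivAt (fun t : ℝ => F (t * Complex.I))
      (Complex.I * ((Complex.I * (Real.sin t : ℂ)) ^ 0 *
        Complex.exp (Complex.I * ((x * Real.sin t - ν * t : ℝ) : ℂ)))) t := by
      intro t
      have h3 : HasDerivAt (fun t : ℝ => (t:ℂ) * Complex.I) Complex.I t := by
        simpa using ((hasDerivAt_id t).ofReal_comp).mul_const Complex.I
      refine (HasDerivAt.comp t (hF _) h3).congr_deriv ?_
      simp only [Ew, pow_zero, one_mul, Complex.sinh_mul_I]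
      rw [mul_comm]
      congr 2
      push_cast
      ring
    rw [Mint, ← intervalIntegral.integral_const_mul,
      intervalIntegral.integral_eq_sub_of_hasDerivAt (fun t _ => hd t)
      (by apply Continuous.intervalIntegrable; fun_prop)]
    simp
  have hIntg : IntegrableOn (fun t : ℝ => ((Real.sinh t ^ 0 *
      Real.exp (-x * Real.sinh t + -ν * t) : ℝ) : ℂ)) (Ioi 0) :=
    (Kint_integrable 0 (-ν) hx).ofReal
  have h1 := intervalIntegral_tendsto_integral_Ioi (0:ℝ) hIntg tendsto_id
  have hK : (∫ t in Ioi (0:ℝ), ((Real.sinh t ^ 0 *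
      Real.exp (-x * Real.sinh t + -ν * t) : ℝ) : ℂ)) = (Kint 0 (-ν) x : ℂ) := by
    rw [integral_complex_ofReal]; rfl
  rw [hK] at h1
  have h2 : ∀ s : ℝ, F (s + π * Complex.I) = F (π * Complex.I) +
      Complex.exp (-Complex.I * (ν * π)) * (∫ t in (0:ℝ)..s, ((Real.sinh t ^ 0 *
      Real.exp (-x * Real.sinh t + -ν * t) : ℝ) : ℂ)) := by
    intro s
    have hd : ∀ t : ℝ, HasDerivAt (fun t : ℝ => F ((t:ℂ) + π * Complex.I))
        (Complex.exp (-Complex.I * (ν * π)) * ((Real.sinh t ^ 0 *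
      Real.exp (-x * Real.sinh t + -ν * t) : ℝ) : ℂ)) t := by
      intro t
      have h3 : HasDerivAt (fun t : ℝ => (t:ℂ) + π * Complex.I) 1 t := by
        simpa using ((hasDerivAt_id t).ofReal_comp).add_const (π * Complex.I)
      refine (HasDerivAt.comp t (hF _) h3).congr_deriv ?_
      rw [Ew, Ew_arg]
      simp only [pow_zero, one_mul, mul_one]
      rw [Complex.ofReal_exp, ← Complex.exp_add]
      congr 1
      simp
      ring
    rw [← intervalIntegral.integral_const_mul,
      intervalIntegral.integral_eq_sub_of_hasDerivAt (fun t _ => hd t)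
      (by apply Continuous.intervalIntegrable; fun_prop)]
    simp
  have h3 : F 0 + Complex.I * Mint 0 ν x = F (π * Complex.I) := by rw [hM]; ring
  rw [h3]
  simp_rw [h2]
  exact (h1.const_mul _).const_add _

lemma tendsto_exp_sinh {c : ℝ} (hc : 0 < c) (μ : ℝ) :
    Tendsto (fun s : ℝ => Real.exp (-c * Real.sinh s + μ * s)) atTop (𝓝 0) := by
  obtain ⟨C, hC, h⟩ := Kint_bound 0 μ hc
  have hz : Tendsto (fun t : ℝ => C * Real.exp (-t)) atTop (𝓝 0) := by
    simpa using Real.tendsto_exp_neg_atTop_nhds_zero.const_mul C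
  apply squeeze_zero_norm' _ hz
  filter_upwards [eventually_ge_atTop 0] with t ht
  rw [Real.norm_of_nonneg (Real.exp_pos _).le]
  simpa using h t ht

/-- Joint limit at the left end. -/
lemma F_left_joint {ν x : ℝ} (hx : 0 < x) {F : ℂ → ℂ} (hF : ∀ w, HasDerivAt F (Ew ν x w) w)
    {l : Filter ℝ} {s v : ℝ → ℝ} (hs : Tendsto s l atTop)
    (hv : ∀ᶠ i in l, v i ∈ Icc 0 (π/3)) :
    Tendsto (fun i => F ((-s i : ℝ) + v i * Complex.I)) l (𝓝 (F 0 - Kint 0 ν x)) := by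
  have h1 := (F_left hx hF).comp hs
  have h2 : Tendsto (fun i => F ((-s i : ℝ) + v i * Complex.I) - F (-(s i : ℂ))) l (𝓝 0) := by
    have hz : Tendsto (fun i => Real.exp (-(x/2) * Real.sinh (s i) + ν * s i) * (π/3)) l (𝓝 0) := by
      simpa using ((tendsto_exp_sinh (by linarith : 0 < x/2) ν).comp hs).mul_const (π/3)
    apply squeeze_zero_norm' _ hz
    filter_upwards [hv, hs.eventually (eventually_ge_atTop 0)] with i hi hsi
    have hpi := Real.pi_pos
    have h3 := vert_bound hF (u := -s i) (a := 0) (b := π/3)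
      (C := Real.exp (-(x/2) * Real.sinh (s i) + ν * s i)) (y := v i) (z := 0)
      (by
        intro y hy
        apply Real.exp_le_exp.mpr
        have hc : 1 / 2 ≤ Real.cos y := by
          rw [← Real.cos_pi_div_three]
          exact Real.cos_le_cos_of_nonneg_of_le_pi hy.1 (by linarith) hy.2
        have hsh : 0 ≤ Real.sinh (s i) := Real.sinh_nonneg_iff.mpr hsi
        rw [Real.sinh_neg]
        have : 0 ≤ x * Real.sinh (s i) * (Real.cos y - 1/2) := by
          apply mul_nonneg (by positivity); linarith
        nlinarith) hi ⟨le_refl _, by positivity⟩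
    have h4 : |v i - 0| ≤ π / 3 := by
      rw [sub_zero, abs_of_nonneg hi.1]; exact hi.2
    have h5 : (((-s i : ℝ) : ℂ) + ((0:ℝ):ℂ) * Complex.I) = -(s i : ℂ) := by push_cast; ring
    rw [h5] at h3
    exact h3.trans (by gcongr)
  have h3 := h2.add h1
  simpa using h3

/-- Joint limit at the right end. -/
lemma F_right_joint {ν x : ℝ} (hx : 0 < x) {F : ℂ → ℂ} (hF : ∀ w, HasDerivAt F (Ew ν x w) w)
    {l : Filter ℝ} {s v : ℝ → ℝ} (hs : Tendsto s l atTop)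
    (hv : ∀ᶠ i in l, v i ∈ Icc (2*π/3) π) :
    Tendsto (fun i => F ((s i : ℝ) + v i * Complex.I)) l
      (𝓝 (F 0 + Complex.I * Mint 0 ν x
        + Complex.exp (-Complex.I * (ν * π)) * Kint 0 (-ν) x)) := by
  have h1 := (F_right hx hF).comp hs
  have h2 : Tendsto (fun i => F ((s i : ℝ) + v i * Complex.I) - F ((s i : ℂ) + π * Complex.I)) l
      (𝓝 0) := by
    have hz : Tendsto (fun i => Real.exp (-(x/2) * Real.sinh (s i) + -ν * s i) * (π/3)) l
        (𝓝 0) := by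
      simpa using ((tendsto_exp_sinh (by linarith : 0 < x/2) (-ν)).comp hs).mul_const (π/3)
    apply squeeze_zero_norm' _ hz
    filter_upwards [hv, hs.eventually (eventually_ge_atTop 0)] with i hi hsi
    have hpi := Real.pi_pos
    have h3 := vert_bound hF (u := s i) (a := 2*π/3) (b := π)
      (C := Real.exp (-(x/2) * Real.sinh (s i) + -ν * s i)) (y := v i) (z := π)
      (by
        intro y hy
        apply Real.exp_le_exp.mpr
        have hc : 1 / 2 ≤ Real.cos (π - y) := by
          rw [← Real.cos_pi_div_three]
          exact Real.cos_le_cos_of_nonneg_of_le_pi (by linarith [hy.2]) (by linarith)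
            (by linarith [hy.1])
        rw [Real.cos_pi_sub] at hc
        have hsh : 0 ≤ Real.sinh (s i) := Real.sinh_nonneg_iff.mpr hsi
        have : 0 ≤ x * Real.sinh (s i) * (-Real.cos y - 1/2) := by
          apply mul_nonneg (by positivity); linarith
        nlinarith) hi ⟨by linarith, le_refl _⟩
    have h4 : |v i - π| ≤ π / 3 := by
      rw [abs_of_nonpos (by linarith [hi.2])]; linarith [hi.1]
    exact h3.trans (by gcongr)
  have h3 := h2.add h1
  simpa using h3

/-! the curve -/

/-- numerator -/
noncomputable def Lc (β v : ℝ) : ℝ := Real.sin β + (v - β) * Real.cos β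
/-- hyperbolic cosine of the real part on the curve -/
noncomputable def hc (β v : ℝ) : ℝ := Lc β v / Real.sin v

lemma Lc_pos {β v : ℝ} (h0 : 0 < β) (h1 : β < π / 2) (hv : 0 ≤ v) : 0 < Lc β v := by
  have hcos : 0 < Real.cos β := Real.cos_pos_of_mem_Ioo ⟨by linarith, h1⟩
  have h2 := Real.lt_tan h0 h1
  rw [Real.tan_eq_sin_div_cos, lt_div_iff₀ hcos] at h2
  unfold Lc
  nlinarith

lemma Lc_gt_sin {β v : ℝ} (h0 : 0 < β) (h1 : β < π / 2) (hv : v ∈ Icc 0 π) (hne : v ≠ β) :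
    Real.sin v < Lc β v := by
  have hpi := Real.pi_pos
  have hd : ∀ y, HasDerivAt (fun v => Lc β v - Real.sin v) (Real.cos β - Real.cos y) y := by
    intro y
    have : HasDerivAt (fun v => Lc β v) (Real.cos β) y := by
      unfold Lc
      exact (((((hasDerivAt_id y).sub_const β).mul_const (Real.cos β))).const_add
        (Real.sin β)).congr_deriv (by simp)
    exact this.sub (Real.hasDerivAt_sin y)
  have hcont : Continuous (fun v => Lc β v - Real.sin v) :=
    continuous_iff_continuousAt.mpr fun y => (hd y).continuousAt
  have hβ0 : Lc β β - Real.sin β = 0 := by simp [Lc]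
  rcases lt_or_gt_of_ne hne with h | h
  · have hanti : StrictAntiOn (fun v => Lc β v - Real.sin v) (Icc 0 β) := by
      apply strictAntiOn_of_deriv_neg (convex_Icc _ _) hcont.continuousOn
      intro y hy
      rw [interior_Icc] at hy
      rw [(hd y).deriv]
      have := Real.cos_lt_cos_of_nonneg_of_le_pi hy.1.le (by linarith) hy.2
      linarith
    have := hanti ⟨hv.1, h.le⟩ ⟨h0.le, le_refl _⟩ h
    simp only [hβ0] at this
    linarith
  · have hmono : StrictMonoOn (fun v => Lc β v - Real.sin v) (Icc β π) := by
      apply strictMonoOn_of_deriv_pos (convex_Icc _ _) hcont.continuousOn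
      intro y hy
      rw [interior_Icc] at hy
      rw [(hd y).deriv]
      have := Real.cos_lt_cos_of_nonneg_of_le_pi h0.le hy.2.le hy.1
      linarith
    have := hmono ⟨le_refl _, by linarith⟩ ⟨h.le, hv.2⟩ h
    simp only [hβ0] at this
    linarith

lemma hc_gt_one {β v : ℝ} (h0 : 0 < β) (h1 : β < π / 2) (hv : v ∈ Ioo 0 π) (hne : v ≠ β) :
    1 < hc β v := by
  have := Real.sin_pos_of_mem_Ioo hv
  rw [hc, lt_div_iff₀ this, one_mul]
  exact Lc_gt_sin h0 h1 ⟨hv.1.le, hv.2.le⟩ hne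

lemma hc_self {β : ℝ} (h0 : 0 < β) (h1 : β < π / 2) : hc β β = 1 := by
  have : 0 < Real.sin β := Real.sin_pos_of_pos_of_lt_pi h0 (by linarith)
  simp [hc, Lc, this.ne']

lemma hc_ge_one {β v : ℝ} (h0 : 0 < β) (h1 : β < π / 2) (hv : v ∈ Ioo 0 π) : 1 ≤ hc β v := by
  rcases eq_or_ne v β with h | h
  · rw [h, hc_self h0 h1]
  · exact (hc_gt_one h0 h1 hv h).le

/-- numerator of the derivative of hc -/
noncomputable def nc (β v : ℝ) : ℝ := Real.sin (v - β) - (v - β) * Real.cos β * Real.cos v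

lemma hc_deriv {β v : ℝ} (hv : v ∈ Ioo 0 π) :
    HasDerivAt (hc β) (nc β v / Real.sin v ^ 2) v := by
  have hs := Real.sin_pos_of_mem_Ioo hv
  have hL : HasDerivAt (fun v => Lc β v) (Real.cos β) v := by
    unfold Lc
    exact (((((hasDerivAt_id v).sub_const β).mul_const (Real.cos β))).const_add
      (Real.sin β)).congr_deriv (by simp)
  refine (hL.div (Real.hasDerivAt_sin v) hs.ne').congr_deriv ?_
  congr 1
  rw [nc, Lc, Real.sin_sub]
  ring

lemma nc_strictMono {β : ℝ} (h0 : 0 < β) (h1 : β < π / 2) : StrictMonoOn (nc β) (Icc 0 π) := by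
  have hd : ∀ y, HasDerivAt (nc β) (Real.sin y * Lc β y) y := by
    intro y
    have e1 : HasDerivAt (fun v => v - β) 1 y := (hasDerivAt_id y).sub_const β
    have e2 : HasDerivAt (fun v => Real.sin (v - β)) (Real.cos (y - β)) y := by
      simpa using e1.sin
    refine (e2.sub ((e1.mul_const (Real.cos β)).mul (Real.hasDerivAt_cos y))).congr_deriv ?_
    rw [Lc, Real.cos_sub]
    ring
  have hcont : Continuous (nc β) :=
    continuous_iff_continuousAt.mpr fun y => (hd y).continuousAt
  apply strictMonoOn_of_deriv_pos (convex_Icc _ _) hcont.continuousOn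
  intro y hy
  rw [interior_Icc] at hy
  rw [(hd y).deriv]
  exact mul_pos (Real.sin_pos_of_mem_Ioo hy) (Lc_pos h0 h1 hy.1.le)

lemma nc_self (β : ℝ) : nc β β = 0 := by simp [nc]

/-- The curve, with a sign `σ` for the branch. -/
noncomputable def cur (σ β v : ℝ) : ℂ := ((σ * Real.arcosh (hc β v) : ℝ) : ℂ) + v * Complex.I

lemma Ew_cur {ν x β σ v : ℝ} (h0 : 0 < β) (h1 : β < π / 2) (hν : ν = x * Real.cos β)
    (hσ : σ = 1 ∨ σ = -1) (hv : v ∈ Ioo 0 π) :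
    ∃ r : ℝ, 0 < r ∧ Ew ν x (cur σ β v) =
      r * Complex.exp (((x * Real.sin β - ν * β : ℝ) : ℂ) * Complex.I) := by
  have hs := Real.sin_pos_of_mem_Ioo hv
  refine ⟨Real.exp (x * Real.sinh (σ * Real.arcosh (hc β v)) * Real.cos v
    - ν * (σ * Real.arcosh (hc β v))), Real.exp_pos _, ?_⟩
  rw [Ew, cur, Ew_arg, Complex.exp_add, Complex.ofReal_exp]
  congr 4
  have hch : Real.cosh (σ * Real.arcosh (hc β v)) = hc β v := by
    have := Real.cosh_arcosh (hc_ge_one h0 h1 hv)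
    rcases hσ with h | h <;> simp [h, Real.cosh_neg, this]
  rw [hch, hc, Lc, hν]
  field_simp
  ring

lemma cur_deriv {β σ v : ℝ} (h0 : 0 < β) (h1 : β < π / 2) (hv : v ∈ Ioo 0 π) (hne : v ≠ β)
    (hsgn : 0 < σ * nc β v) :
    ∃ d : ℝ, 0 < d ∧ HasDerivAt (cur σ β) (d + Complex.I) v := by
  have hs := Real.sin_pos_of_mem_Ioo hv
  have hg := hc_gt_one h0 h1 hv hne
  have hsq : 0 < √(hc β v ^ 2 - 1) := by
    apply Real.sqrt_pos.mpr
    nlinarith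
  refine ⟨σ * ((√(hc β v ^ 2 - 1))⁻¹ * (nc β v / Real.sin v ^ 2)), ?_, ?_⟩
  · have : σ * ((√(hc β v ^ 2 - 1))⁻¹ * (nc β v / Real.sin v ^ 2)) =
      (σ * nc β v) * ((√(hc β v ^ 2 - 1))⁻¹ / Real.sin v ^ 2) := by ring
    rw [this]
    positivity
  · have e1 : HasDerivAt (fun v => σ * Real.arcosh (hc β v))
        (σ * ((√(hc β v ^ 2 - 1))⁻¹ * (nc β v / Real.sin v ^ 2))) v :=
      (HasDerivAt.comp v (Real.hasDerivAt_arcosh hg) (hc_deriv hv)).const_mul σ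
    have e2 : HasDerivAt (fun v : ℝ => (v:ℂ) * Complex.I) Complex.I v := by
      simpa using ((hasDerivAt_id v).ofReal_comp).mul_const Complex.I
    exact e1.ofReal_comp.add e2

lemma cur_cont {β σ : ℝ} (h0 : 0 < β) (h1 : β < π / 2) : ContinuousOn (cur σ β) (Ioo 0 π) := by
  have hh : ContinuousOn (hc β) (Ioo 0 π) := fun v hv =>
    (hc_deriv hv).continuousAt.continuousWithinAt
  have h2 : ContinuousOn (fun v => Real.arcosh (hc β v)) (Ioo 0 π) :=
    Real.continuousOn_arcosh.comp hh (fun v hv => hc_ge_one h0 h1 hv)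
  unfold cur
  exact (Complex.continuous_ofReal.comp_continuousOn (h2.const_smul σ)).add (by fun_prop)

lemma cur_self {β σ : ℝ} (h0 : 0 < β) (h1 : β < π / 2) : cur σ β β = β * Complex.I := by
  simp [cur, hc_self h0 h1]

/-- Both components of the rotated primitive are increasing along each half of the curve. -/
lemma Phi_mono {ν x β σ : ℝ} (h0 : 0 < β) (h1 : β < π / 2) (hν : ν = x * Real.cos β)
    (hσ : σ = 1 ∨ σ = -1) {F : ℂ → ℂ} (hF : ∀ w, HasDerivAt F (Ew ν x w) w)
    {D : Set ℝ} (hD : Convex ℝ D) (hDs : D ⊆ Ioo 0 π)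
    (hsgn : ∀ v ∈ interior D, v ≠ β ∧ 0 < σ * nc β v) :
    StrictMonoOn (fun v => (Complex.exp (-((x * Real.sin β - ν * β : ℝ) : ℂ) * Complex.I)
      * F (cur σ β v)).re) D ∧
    StrictMonoOn (fun v => (Complex.exp (-((x * Real.sin β - ν * β : ℝ) : ℂ) * Complex.I)
      * F (cur σ β v)).im) D := by
  set φ : ℝ := x * Real.sin β - ν * β with hφ
  have hFc : Continuous F := continuous_iff_continuousAt.mpr fun y => (hF y).continuousAt
  have hcont : ContinuousOn (fun v => Complex.exp (-(φ : ℂ) * Complex.I) * F (cur σ β v)) D :=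
    continuousOn_const.mul (hFc.comp_continuousOn ((cur_cont h0 h1).mono hDs))
  have hder : ∀ v ∈ interior D, ∃ r d : ℝ, 0 < r ∧ 0 < d ∧
      HasDerivAt (fun v => Complex.exp (-(φ : ℂ) * Complex.I) * F (cur σ β v))
        (((r * d : ℝ) : ℂ) + (r : ℂ) * Complex.I) v := by
    intro v hv
    have hv' := hDs (interior_subset hv)
    obtain ⟨r, hr, hE⟩ := Ew_cur (σ := σ) h0 h1 hν hσ hv'
    obtain ⟨d, hd, hder⟩ := cur_deriv h0 h1 hv' (hsgn v hv).1 (hsgn v hv).2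
    refine ⟨r, d, hr, hd, ?_⟩
    refine ((HasDerivAt.comp v (hF _) hder).const_mul _).congr_deriv ?_
    rw [hE, ← hφ]
    have hone : Complex.exp (-(φ : ℂ) * Complex.I) * Complex.exp ((φ : ℂ) * Complex.I) = 1 := by
      rw [← Complex.exp_add]; simp
    push_cast
    linear_combination (r * (d + Complex.I)) * hone
  constructor
  · apply strictMonoOn_of_deriv_pos hD (Complex.continuous_re.comp_continuousOn hcont)
    intro v hv
    obtain ⟨r, d, hr, hd, h⟩ := hder v hv
    rw [show deriv (Complex.re ∘ fun v => Complex.exp (-(φ : ℂ) * Complex.I) * F (cur σ β v)) v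
      = _ from (hasDerivAt_re h).deriv]
    simp
    positivity
  · apply strictMonoOn_of_deriv_pos hD (Complex.continuous_im.comp_continuousOn hcont)
    intro v hv
    obtain ⟨r, d, hr, hd, h⟩ := hder v hv
    rw [show deriv (Complex.im ∘ fun v => Complex.exp (-(φ : ℂ) * Complex.I) * F (cur σ β v)) v
      = _ from (hasDerivAt_im h).deriv]
    simp
    positivity

lemma tendsto_arcosh : Tendsto Real.arcosh atTop atTop := by
  apply tendsto_atTop_mono' _ _ Real.tendsto_log_atTop
  filter_upwards [eventually_ge_atTop 1] with y hy
  unfold Real.arcosh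
  apply Real.log_le_log (by linarith)
  linarith [Real.sqrt_nonneg (y ^ 2 - 1)]

lemma hc_tendsto_zero {β : ℝ} (h0 : 0 < β) (h1 : β < π / 2) :
    Tendsto (hc β) (𝓝[>] 0) atTop := by
  unfold hc
  have hL : Tendsto (Lc β) (𝓝[>] 0) (𝓝 (Lc β 0)) := by
    apply tendsto_nhdsWithin_of_tendsto_nhds
    apply Continuous.tendsto
    unfold Lc; fun_prop
  have hs : Tendsto (fun v => (Real.sin v)⁻¹) (𝓝[>] 0) atTop := by
    apply Tendsto.inv_tendsto_nhdsGT_zero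
    apply tendsto_nhdsWithin_of_tendsto_nhds_of_eventually_within
    · apply tendsto_nhdsWithin_of_tendsto_nhds
      have := Real.continuous_sin.tendsto 0
      rwa [Real.sin_zero] at this
    · filter_upwards [Ioo_mem_nhdsGT Real.pi_pos] with v hv
      exact Real.sin_pos_of_mem_Ioo hv
  exact hL.pos_mul_atTop (Lc_pos h0 h1 le_rfl) hs

lemma hc_tendsto_pi {β : ℝ} (h0 : 0 < β) (h1 : β < π / 2) :
    Tendsto (hc β) (𝓝[<] π) atTop := by
  unfold hc
  have hL : Tendsto (Lc β) (𝓝[<] π) (𝓝 (Lc β π)) := by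
    apply tendsto_nhdsWithin_of_tendsto_nhds
    apply Continuous.tendsto
    unfold Lc; fun_prop
  have hs : Tendsto (fun v => (Real.sin v)⁻¹) (𝓝[<] π) atTop := by
    apply Tendsto.inv_tendsto_nhdsGT_zero
    apply tendsto_nhdsWithin_of_tendsto_nhds_of_eventually_within
    · apply tendsto_nhdsWithin_of_tendsto_nhds
      have := Real.continuous_sin.tendsto π
      rwa [Real.sin_pi] at this
    · filter_upwards [Ioo_mem_nhdsLT Real.pi_pos] with v hv
      exact Real.sin_pos_of_mem_Ioo hv
  exact hL.pos_mul_atTop (Lc_pos h0 h1 Real.pi_pos.le) hs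

/-- if a strictly increasing function on `(a,b]` has a limit at `a`, its value at `b` is larger -/
lemma lim_lt_of_mono_left {f : ℝ → ℝ} {a b l : ℝ} (hab : a < b) (hf : StrictMonoOn f (Ioc a b))
    (hl : Tendsto f (𝓝[>] a) (𝓝 l)) : l < f b := by
  have hm : (a + b) / 2 ∈ Ioc a b := ⟨by linarith, by linarith⟩
  have h1 : f ((a + b) / 2) < f b := hf hm ⟨hab, le_refl _⟩ (by linarith)
  have h2 : l ≤ f ((a + b) / 2) := by
    apply le_of_tendsto hl
    filter_upwards [Ioo_mem_nhdsGT (by linarith : a < (a + b) / 2)] with v hv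
    exact (hf ⟨hv.1, by linarith [hv.2]⟩ hm hv.2).le
  linarith

lemma lim_gt_of_mono_right {f : ℝ → ℝ} {a b l : ℝ} (hab : a < b) (hf : StrictMonoOn f (Ico a b))
    (hl : Tendsto f (𝓝[<] b) (𝓝 l)) : f a < l := by
  have hm : (a + b) / 2 ∈ Ico a b := ⟨by linarith, by linarith⟩
  have h1 : f a < f ((a + b) / 2) := hf ⟨le_refl _, hab⟩ hm (by linarith)
  have h2 : f ((a + b) / 2) ≤ l := by
    apply ge_of_tendsto hl
    filter_upwards [Ioo_mem_nhdsLT (by linarith : (a + b) / 2 < b)] with v hv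
    exact (hf hm ⟨by linarith [hv.1], hv.2⟩ hv.1).le
  linarith

/-- The phase function. -/
noncomputable def ph (ν x : ℝ) : ℝ := √(x ^ 2 - ν ^ 2) - ν * Real.arccos (ν / x)

theorem A_quadrant {ν x : ℝ} (hν : 0 < ν) (hx : ν < x) : ∃ a b : ℝ, 0 < a ∧ 0 < b ∧
    A0 ν x = Complex.exp ((ph ν x : ℂ) * Complex.I) * (a + b * Complex.I) := by
  have hx0 : 0 < x := hν.trans hx
  set β := Real.arccos (ν / x) with hβ
  have hr0 : 0 < ν / x := by positivity
  have hr1 : ν / x < 1 := (div_lt_one hx0).mpr hx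
  have h0 : 0 < β := Real.arccos_pos.mpr hr1
  have h1 : β < π / 2 := Real.arccos_lt_pi_div_two.mpr hr0
  have hcos : ν = x * Real.cos β := by
    rw [hβ, Real.cos_arccos (by linarith) hr1.le]; field_simp
  have hph : ph ν x = x * Real.sin β - ν * β := by
    rw [ph, hβ, Real.sin_arccos, ← hβ]
    congr 1
    have : x ^ 2 - ν ^ 2 = x ^ 2 * (1 - (ν / x) ^ 2) := by field_simp
    rw [this, Real.sqrt_mul (by positivity), Real.sqrt_sq hx0.le]
  obtain ⟨F, hF⟩ := exists_primitive ν x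
  have hpi := Real.pi_pos
  set e : ℂ := Complex.exp (-((x * Real.sin β - ν * β : ℝ) : ℂ) * Complex.I) with he
  -- left half
  have m1 := Phi_mono h0 h1 hcos (Or.inr rfl) hF (convex_Ioc 0 β)
    (fun v hv => ⟨hv.1, by linarith [hv.2]⟩) (by
      intro v hv
      rw [interior_Ioc] at hv
      refine ⟨hv.2.ne, ?_⟩
      have := nc_strictMono h0 h1 ⟨hv.1.le, by linarith [hv.2]⟩ ⟨h0.le, by linarith⟩ hv.2
      rw [nc_self] at this
      linarith)
  have l1 : Tendsto (fun v => e * F (cur (-1) β v)) (𝓝[>] 0) (𝓝 (e * (F 0 - Kint 0 ν x))) := by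
    apply Tendsto.const_mul
    have := F_left_joint hx0 hF (l := 𝓝[>] 0) (s := fun v => Real.arcosh (hc β v)) (v := id)
      (tendsto_arcosh.comp (hc_tendsto_zero h0 h1))
      (by
        filter_upwards [Ioo_mem_nhdsGT (by linarith : (0:ℝ) < π / 3)] with v hv
        exact ⟨hv.1.le, hv.2.le⟩)
    refine this.congr fun v => ?_
    simp [cur]
  have a1 := lim_lt_of_mono_left h0 m1.1 ((Complex.continuous_re.tendsto _).comp l1)
  have a2 := lim_lt_of_mono_left h0 m1.2 ((Complex.continuous_im.tendsto _).comp l1)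
  -- right half
  have m2 := Phi_mono h0 h1 hcos (Or.inl rfl) hF (convex_Ico β π)
    (fun v hv => ⟨by linarith [hv.1], hv.2⟩) (by
      intro v hv
      rw [interior_Ico] at hv
      refine ⟨hv.1.ne', ?_⟩
      have := nc_strictMono h0 h1 ⟨h0.le, by linarith⟩ ⟨by linarith [hv.1], hv.2.le⟩ hv.1
      rw [nc_self] at this
      linarith)
  have l2 : Tendsto (fun v => e * F (cur 1 β v)) (𝓝[<] π) (𝓝 (e * (F 0 + Complex.I * Mint 0 ν x
        + Complex.exp (-Complex.I * (ν * π)) * Kint 0 (-ν) x))) := by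
    apply Tendsto.const_mul
    have := F_right_joint hx0 hF (l := 𝓝[<] π) (s := fun v => Real.arcosh (hc β v)) (v := id)
      (tendsto_arcosh.comp (hc_tendsto_pi h0 h1))
      (by
        filter_upwards [Ioo_mem_nhdsLT (by linarith : 2 * π / 3 < π)] with v hv
        exact ⟨hv.1.le, hv.2.le⟩)
    refine this.congr fun v => ?_
    simp [cur]
  have b1 := lim_gt_of_mono_right (by linarith) m2.1 ((Complex.continuous_re.tendsto _).comp l2)
  have b2 := lim_gt_of_mono_right (by linarith) m2.2 ((Complex.continuous_im.tendsto _).comp l2)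
  rw [cur_self h0 h1] at a1 a2 b1 b2
  have hA : e * A0 ν x = e * (F 0 + Complex.I * Mint 0 ν x
        + Complex.exp (-Complex.I * (ν * π)) * Kint 0 (-ν) x) - e * (F 0 - Kint 0 ν x) := by
    rw [A0]; ring
  refine ⟨(e * A0 ν x).re, (e * A0 ν x).im, ?_, ?_, ?_⟩
  · rw [hA, Complex.sub_re]; linarith
  · rw [hA, Complex.sub_im]; linarith
  · rw [Complex.re_add_im, hph, he, ← mul_assoc, ← Complex.exp_add]
    rw [neg_mul, add_neg_cancel, Complex.exp_zero, one_mul]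


/-! ### Part 3: the phase and the position of the zeros -/

lemma mono_of_hasDeriv {f f' : ℝ → ℝ} {D : Set ℝ} (hD : Convex ℝ D)
    (h : ∀ x ∈ D, HasDerivAt f (f' x) x) (h' : ∀ x ∈ D, 0 ≤ f' x) : MonotoneOn f D := by
  apply monotoneOn_of_deriv_nonneg hD
  · exact fun x hx => (h x hx).continuousAt.continuousWithinAt
  · exact fun x hx => (h x (interior_subset hx)).differentiableAt.differentiableWithinAt
  · intro x hx
    rw [(h x (interior_subset hx)).deriv]
    exact h' x (interior_subset hx)

lemma Q_pos {ν x : ℝ} (hν : 0 < ν) (hx : ν < x) : 0 < √(x ^ 2 - ν ^ 2) := by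
  apply Real.sqrt_pos.mpr; nlinarith

lemma Q_sq {ν x : ℝ} (hν : 0 < ν) (hx : ν < x) : √(x ^ 2 - ν ^ 2) ^ 2 = x ^ 2 - ν ^ 2 := by
  apply Real.sq_sqrt; nlinarith

lemma Q_hasDerivAt {ν x : ℝ} (hν : 0 < ν) (hx : ν < x) :
    HasDerivAt (fun x => √(x ^ 2 - ν ^ 2)) (x / √(x ^ 2 - ν ^ 2)) x := by
  have h1 : HasDerivAt (fun x : ℝ => x ^ 2 - ν ^ 2) (2 * x) x := by
    exact (((hasDerivAt_id x).pow 2).sub_const (ν ^ 2)).congr_deriv (by simp)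
  have hQ := Q_pos hν hx
  refine (h1.sqrt (by nlinarith)).congr_deriv ?_
  field_simp

lemma sqrt_ratio {ν x : ℝ} (hν : 0 < ν) (hx : ν < x) :
    √(1 - (ν / x) ^ 2) = √(x ^ 2 - ν ^ 2) / x := by
  have hx0 : 0 < x := hν.trans hx
  have : 1 - (ν / x) ^ 2 = (x ^ 2 - ν ^ 2) / x ^ 2 := by field_simp
  rw [this, Real.sqrt_div (by nlinarith), Real.sqrt_sq hx0.le]

lemma ph_hasDerivAt {ν x : ℝ} (hν : 0 < ν) (hx : ν < x) :
    HasDerivAt (ph ν) (√(x ^ 2 - ν ^ 2) / x) x := by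
  have hx0 : 0 < x := hν.trans hx
  have hQ := Q_pos hν hx
  have hr0 : 0 < ν / x := by positivity
  have hr1 : ν / x < 1 := (div_lt_one hx0).mpr hx
  have h2 : HasDerivAt (fun x => ν / x) (-ν / x ^ 2) x := by
    refine ((hasDerivAt_const x ν).div (hasDerivAt_id x) hx0.ne').congr_deriv ?_
    simp
  have h3 := HasDerivAt.comp x (Real.hasDerivAt_arccos (by linarith) hr1.ne) h2
  refine ((Q_hasDerivAt hν hx).sub (h3.const_mul ν)).congr_deriv ?_
  rw [sqrt_ratio hν hx]
  have := Q_sq hν hx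
  field_simp
  linear_combination -this

lemma ph_cont {ν : ℝ} (hν : 0 < ν) : ContinuousOn (ph ν) (Ici ν) := by
  unfold ph
  apply ContinuousOn.sub
  · fun_prop
  · apply ContinuousOn.mul continuousOn_const
    apply Real.continuous_arccos.comp_continuousOn
    apply ContinuousOn.div continuousOn_const continuousOn_id
    intro x hx
    exact (hν.trans_le hx).ne'

lemma ph_self {ν : ℝ} (hν : 0 < ν) : ph ν ν = 0 := by
  simp [ph, hν.ne']

lemma ph_strictMono {ν : ℝ} (hν : 0 < ν) : StrictMonoOn (ph ν) (Ici ν) := by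
  apply strictMonoOn_of_deriv_pos (convex_Ici _) (ph_cont hν)
  intro x hx
  rw [interior_Ici] at hx
  rw [(ph_hasDerivAt hν hx).deriv]
  have := Q_pos hν hx
  have : 0 < x := hν.trans hx
  positivity

lemma ph_pos {ν x : ℝ} (hν : 0 < ν) (hx : ν < x) : 0 < ph ν x := by
  rw [← ph_self hν]
  exact ph_strictMono hν (self_mem_Ici) hx.le hx

lemma ph_tendsto {ν : ℝ} (hν : 0 < ν) : Tendsto (ph ν) atTop atTop := by
  have h : Tendsto (fun x : ℝ => x - (ν + ν * π)) atTop atTop :=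
    tendsto_atTop_add_const_right _ _ tendsto_id
  apply tendsto_atTop_mono' _ _ h
  filter_upwards [eventually_gt_atTop ν] with x hx
  have h1 : x - ν ≤ √(x ^ 2 - ν ^ 2) := by
    apply Real.le_sqrt_of_sq_le; nlinarith
  have h2 := Real.arccos_le_pi (ν / x)
  unfold ph
  nlinarith

lemma ph_surj {ν y : ℝ} (hν : 0 < ν) (hy : 0 < y) : ∃ x, ν < x ∧ ph ν x = y := by
  obtain ⟨b, hb⟩ := ((ph_tendsto hν).eventually (eventually_ge_atTop y)).and
    (eventually_ge_atTop ν) |>.exists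
  have := intermediate_value_Icc hb.2 ((ph_cont hν).mono Icc_subset_Ici_self)
  rw [ph_self hν] at this
  obtain ⟨x, hx, hxy⟩ := this ⟨hy.le, hb.1⟩
  refine ⟨x, ?_, hxy⟩
  rcases hx.1.lt_or_eq with h | h
  · exact h
  · rw [← h, ph_self hν] at hxy; linarith

lemma ph_lt_iff {ν x y : ℝ} (hν : 0 < ν) (hx : ν < x) (hy : ν < y) : ph ν x < ph ν y ↔ x < y :=
  (ph_strictMono hν).lt_iff_lt hx.le hy.le

lemma ph_le_iff {ν x y : ℝ} (hν : 0 < ν) (hx : ν < x) (hy : ν < y) : ph ν x ≤ ph ν y ↔ x ≤ y :=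
  (ph_strictMono hν).le_iff_le hx.le hy.le

lemma ph_le_Q {ν x : ℝ} (hν : 0 < ν) : ph ν x ≤ √(x ^ 2 - ν ^ 2) := by
  unfold ph
  have := mul_nonneg hν.le (Real.arccos_nonneg (ν / x))
  linarith

lemma ph_le_Q_cube {ν x : ℝ} (hν : 0 < ν) (hx : ν < x) :
    3 * ν ^ 2 * ph ν x ≤ √(x ^ 2 - ν ^ 2) ^ 3 := by
  have hm : MonotoneOn (fun x => √(x ^ 2 - ν ^ 2) ^ 3 - 3 * ν ^ 2 * ph ν x) (Ici ν) := by
    apply monotoneOn_of_deriv_nonneg (convex_Ici _)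
    · apply ContinuousOn.sub
      · fun_prop
      · exact continuousOn_const.mul (ph_cont hν)
    · intro y hy
      rw [interior_Ici] at hy
      exact (((Q_hasDerivAt hν hy).pow 3).sub
        ((ph_hasDerivAt hν hy).const_mul (3 * ν ^ 2))).differentiableAt.differentiableWithinAt
    · intro y hy
      rw [interior_Ici] at hy
      have hy : ν < y := hy
      have h := (((Q_hasDerivAt hν hy).pow 3).sub
        ((ph_hasDerivAt hν hy).const_mul (3 * ν ^ 2)))
      rw [show deriv (fun x => √(x ^ 2 - ν ^ 2) ^ 3 - 3 * ν ^ 2 * ph ν x) y = _ from h.deriv]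
      have hQ := Q_pos hν hy
      have hy0 : 0 < y := hν.trans hy
      have : (3:ℕ) * √(y ^ 2 - ν ^ 2) ^ (3 - 1) * (y / √(y ^ 2 - ν ^ 2)) -
          3 * ν ^ 2 * (√(y ^ 2 - ν ^ 2) / y) = 3 * √(y ^ 2 - ν ^ 2) * (y ^ 2 - ν ^ 2) / y := by
        push_cast
        field_simp
      rw [this]
      have : 0 < y ^ 2 - ν ^ 2 := by nlinarith
      positivity
  have := hm self_mem_Ici hx.le hx.le
  simp only [ph_self hν] at this
  simp at this
  linarith

lemma ph_asymp {ν : ℝ} (hν : 0 < ν) :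
    Tendsto (fun x => ph ν x - (x - ν * π / 2)) atTop (𝓝 0) := by
  have h0 : Tendsto (fun x : ℝ => ν / x) atTop (𝓝 0) := tendsto_const_nhds.div_atTop tendsto_id
  have h1 : Tendsto (fun x : ℝ => Real.arccos (ν / x)) atTop (𝓝 (π / 2)) := by
    have := (Real.continuous_arccos.tendsto 0).comp h0
    rwa [Real.arccos_zero] at this
  have h2 : Tendsto (fun x : ℝ => √(x ^ 2 - ν ^ 2) - x) atTop (𝓝 0) := by
    have hz : Tendsto (fun x : ℝ => ν * (ν / x)) atTop (𝓝 0) := by simpa using h0.const_mul ν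
    apply squeeze_zero_norm' _ hz
    filter_upwards [eventually_gt_atTop ν] with x hx
    have hx0 : 0 < x := hν.trans hx
    have hQ := Q_pos hν hx
    have hQ2 := Q_sq hν hx
    have hle : √(x ^ 2 - ν ^ 2) ≤ x := by
      apply Real.sqrt_le_iff.mpr ⟨hx0.le, by nlinarith⟩
    rw [Real.norm_eq_abs, abs_of_nonpos (by linarith), ← mul_div_assoc, le_div_iff₀ hx0]
    nlinarith
  have h3 := h2.sub ((h1.const_mul ν).sub_const (ν * (π / 2)))
  simp only [sub_self] at h3
  refine h3.congr fun x => ?_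
  unfold ph
  ring

lemma gfun_ph {ν x : ℝ} (hν : 0 < ν) (hx : ν < x) : x * gfun (ν / x) = ph ν x / π := by
  have hx0 : 0 < x := hν.trans hx
  rw [gfun, sqrt_ratio hν hx, ph]
  field_simp

/-! real form of the quadrant statement -/

lemma JY_form {ν x : ℝ} (hν : 0 < ν) (hx : ν < x) : ∃ a b : ℝ, 0 < a ∧ 0 < b ∧
    Jf ν x = a * Real.sin (ph ν x) + b * Real.cos (ph ν x) ∧
    Yf ν x = a * Real.cos (ph ν x) - b * Real.sin (ph ν x) := by
  obtain ⟨a, b, ha, hb, h⟩ := A_quadrant hν hx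
  refine ⟨a, b, ha, hb, ?_, ?_⟩
  · rw [Jf, h, Complex.exp_mul_I, ← Complex.ofReal_cos, ← Complex.ofReal_sin]
    simp [-Complex.ofReal_cos, -Complex.ofReal_sin]
    ring
  · rw [Yf, h, Complex.exp_mul_I, ← Complex.ofReal_cos, ← Complex.ofReal_sin]
    simp [-Complex.ofReal_cos, -Complex.ofReal_sin]
    ring

lemma JY_form' {ν x : ℝ} (hν : 0 < ν) (hx : ν < x) (m : ℕ) : ∃ a b : ℝ, 0 < a ∧ 0 < b ∧
    (-1) ^ m * Jf ν x = -a * Real.sin (m * π - ph ν x) + b * Real.cos (m * π - ph ν x) ∧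
    (-1) ^ m * Yf ν x = a * Real.cos (m * π - ph ν x) + b * Real.sin (m * π - ph ν x) := by
  obtain ⟨a, b, ha, hb, h1, h2⟩ := JY_form hν hx
  refine ⟨a, b, ha, hb, ?_, ?_⟩
  · rw [h1, Real.sin_nat_mul_pi_sub, Real.cos_nat_mul_pi_sub]; ring
  · rw [h2, Real.sin_nat_mul_pi_sub, Real.cos_nat_mul_pi_sub]; ring

lemma W1 {ν x : ℝ} (hν : 0 < ν) (hx : ν < x) {m : ℕ} (h1 : ((m:ℝ) - 1/2) * π ≤ ph ν x)
    (h2 : ph ν x ≤ m * π) : 0 < (-1) ^ m * Yf ν x := by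
  obtain ⟨a, b, ha, hb, -, h⟩ := JY_form' hν hx m
  rw [h]
  have hp := Real.pi_pos
  have hs := Real.sin_nonneg_of_nonneg_of_le_pi (x := m * π - ph ν x) (by linarith) (by linarith)
  have hc' := Real.cos_nonneg_of_mem_Icc (x := m * π - ph ν x) ⟨by linarith, by linarith⟩
  have hsc := Real.sin_sq_add_cos_sq (m * π - ph ν x)
  rcases hs.eq_or_lt with h0 | h0
  · rw [← h0] at hsc ⊢
    have : Real.cos (m * π - ph ν x) ≠ 0 := by
      intro h; rw [h] at hsc; norm_num at hsc
    have := lt_of_le_of_ne hc' this.symm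
    positivity
  · positivity

lemma W2 {ν x : ℝ} (hν : 0 < ν) (hx : ν < x) {m : ℕ} (h1 : ((m:ℝ) - 1) * π < ph ν x)
    (h2 : ph ν x ≤ ((m:ℝ) - 1/2) * π) : (-1) ^ m * Jf ν x < 0 := by
  obtain ⟨a, b, ha, hb, h, -⟩ := JY_form' hν hx m
  rw [h]
  have hp := Real.pi_pos
  have hs := Real.sin_pos_of_pos_of_lt_pi (x := m * π - ph ν x) (by linarith) (by linarith)
  have hc' := Real.cos_nonpos_of_pi_div_two_le_of_le (x := m * π - ph ν x) (by linarith)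
    (by linarith)
  nlinarith [mul_pos ha hs, mul_nonneg hb.le (neg_nonneg.mpr hc')]

lemma W3 {ν x : ℝ} (hν : 0 < ν) (hx : ν < x) {m : ℕ}
    (h2 : ph ν x = m * π) : 0 < (-1) ^ m * Jf ν x := by
  obtain ⟨a, b, ha, hb, h, -⟩ := JY_form' hν hx m
  rw [h, h2]
  simpa using hb

lemma wronskian (ν : ℝ) : ∃ c : ℝ, ∀ x, 0 < x → x * (Jf ν x * Yf1 ν x - Jf1 ν x * Yf ν x) = c := by
  have hd : ∀ x, 0 < x → HasDerivAt (fun x => x * (Jf ν x * Yf1 ν x - Jf1 ν x * Yf ν x)) 0 x := by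
    intro x hx
    refine ((hasDerivAt_id x).mul (((Jf_hasDerivAt ν hx).mul (Yf1_hasDerivAt ν hx)).sub
      ((Jf1_hasDerivAt ν hx).mul (Yf_hasDerivAt ν hx)))).congr_deriv ?_
    simp only [id]
    field_simp
    simp only [Pi.mul_apply, Pi.sub_apply]
    ring
  refine ⟨1 * (Jf ν 1 * Yf1 ν 1 - Jf1 ν 1 * Yf ν 1), fun x hx => ?_⟩
  have := isOpen_Ioi.is_const_of_deriv_eq_zero (isPreconnected_Ioi (a := (0:ℝ)))
    (f := fun x => x * (Jf ν x * Yf1 ν x - Jf1 ν x * Yf ν x))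
    (fun y hy => (hd y hy).differentiableAt.differentiableWithinAt)
    (fun y hy => (hd y hy).deriv) (x := x) (y := 1) hx (by simp)
  exact this

lemma quot_deriv {ν c : ℝ}
    (hc : ∀ x, 0 < x → x * (Jf ν x * Yf1 ν x - Jf1 ν x * Yf ν x) = c) {x : ℝ} (hx : 0 < x)
    (hY : Yf ν x ≠ 0) :
    HasDerivAt (fun x => Jf ν x / Yf ν x) (-c / (x * Yf ν x ^ 2)) x := by
  refine ((Jf_hasDerivAt ν hx).div (Yf_hasDerivAt ν hx) hY).congr_deriv ?_
  rw [← hc x hx]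
  field_simp
  ring

lemma Yf_ne {ν x : ℝ} (hν : 0 < ν) (hx : ν < x) {m : ℕ} (h1 : ((m:ℝ) - 1/2) * π ≤ ph ν x)
    (h2 : ph ν x ≤ m * π) : Yf ν x ≠ 0 := by
  intro h
  have := W1 hν hx h1 h2
  rw [h, mul_zero] at this
  exact lt_irrefl _ this

lemma wronskian_ne {ν c : ℝ} (hν : 0 < ν)
    (hc : ∀ x, 0 < x → x * (Jf ν x * Yf1 ν x - Jf1 ν x * Yf ν x) = c) : c ≠ 0 := by
  intro hc0
  have hp := Real.pi_pos
  obtain ⟨x1, hx1, e1⟩ := ph_surj (ν := ν) (y := π / 2) hν (by positivity)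
  obtain ⟨x2, hx2, e2⟩ := ph_surj (ν := ν) (y := π) hν (by positivity)
  have h12 : x1 < x2 := by
    rw [← ph_lt_iff hν hx1 hx2, e1, e2]; linarith
  have hY : ∀ x ∈ Icc x1 x2, Yf ν x ≠ 0 := by
    intro x hx
    have hνx : ν < x := by linarith [hx.1]
    apply Yf_ne hν hνx (m := 1)
    · have := (ph_le_iff hν hx1 hνx).mpr hx.1
      push_cast; linarith
    · have := (ph_le_iff hν hνx hx2).mpr hx.2
      push_cast; linarith
  have hd : ∀ x ∈ Icc x1 x2, HasDerivAt (fun x => Jf ν x / Yf ν x) (-c / (x * Yf ν x ^ 2)) x :=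
    fun x hx => quot_deriv hc (by linarith [hx.1]) (hY x hx)
  obtain ⟨y, hy, hs⟩ := exists_hasDerivAt_eq_slope _ _ h12
    (fun x hx => (hd x hx).continuousAt.continuousWithinAt)
    (fun x hx => hd x ⟨hx.1.le, hx.2.le⟩)
  rw [hc0] at hs
  have j1 := W2 hν hx1 (m := 1) (by rw [e1]; push_cast; linarith) (by rw [e1]; push_cast; linarith)
  have j2 := W3 hν hx2 (m := 1) (by rw [e2]; push_cast; linarith)
  have y1 := W1 hν hx1 (m := 1) (by rw [e1]; push_cast; linarith) (by rw [e1]; push_cast; linarith)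
  have y2 := W1 hν hx2 (m := 1) (by rw [e2]; push_cast; linarith) (by rw [e2]; push_cast; linarith)
  norm_num at j1 j2 y1 y2
  have q1 : Jf ν x1 / Yf ν x1 < 0 := div_neg_of_pos_of_neg j1 y1
  have q2 : 0 < Jf ν x2 / Yf ν x2 := div_pos_of_neg_of_neg j2 y2
  have : 0 < (Jf ν x2 / Yf ν x2 - Jf ν x1 / Yf ν x1) / (x2 - x1) :=
    div_pos (by linarith) (by linarith)
  rw [← hs] at this
  simp at this

lemma Jf1_ne {ν x : ℝ} (hν : 0 < ν) (hx : 0 < x) (h : Jf ν x = 0) : Jf1 ν x ≠ 0 := by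
  obtain ⟨c, hc⟩ := wronskian ν
  intro h1
  apply wronskian_ne hν hc
  rw [← hc x hx, h, h1]
  ring

/-- the window of a zero -/
lemma zero_window {ν x : ℝ} (hν : 0 < ν) (hx : ν < x) (h : Jf ν x = 0) :
    1 ≤ ⌈ph ν x / π⌉₊ ∧ ((⌈ph ν x / π⌉₊ : ℝ) - 1/2) * π < ph ν x ∧
      ph ν x < (⌈ph ν x / π⌉₊ : ℝ) * π := by
  have hp := Real.pi_pos
  have hph := ph_pos hν hx
  set m := ⌈ph ν x / π⌉₊ with hm
  have hm1 : 1 ≤ m := Nat.one_le_ceil_iff.mpr (by positivity)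
  have hle : ph ν x ≤ m * π := by
    rw [← div_le_iff₀ hp]; exact Nat.le_ceil _
  have hlt : ((m:ℝ) - 1) * π < ph ν x := by
    rw [← lt_div_iff₀ hp]
    have := Nat.ceil_lt_add_one (a := ph ν x / π) (by positivity)
    linarith
  refine ⟨hm1, ?_, ?_⟩
  · by_contra! hcon
    have := W2 hν hx hlt hcon
    rw [h, mul_zero] at this
    exact lt_irrefl _ this
  · rcases hle.lt_or_eq with h' | h'
    · exact h'
    · have := W3 hν hx h'
      rw [h, mul_zero] at this
      exact absurd this (lt_irrefl _)

lemma window_unique {ν x y : ℝ} (hν : 0 < ν) (hx : ν < x) (hxy : x < y) (h : Jf ν x = 0)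
    (h' : Jf ν y = 0) : ⌈ph ν x / π⌉₊ ≠ ⌈ph ν y / π⌉₊ := by
  intro he
  have hy : ν < y := hx.trans hxy
  obtain ⟨c, hc⟩ := wronskian ν
  obtain ⟨-, a1, a2⟩ := zero_window hν hx h
  obtain ⟨-, b1, b2⟩ := zero_window hν hy h'
  rw [← he] at b1 b2
  have hY : ∀ t ∈ Icc x y, Yf ν t ≠ 0 := by
    intro t ht
    have hνx : ν < t := by linarith [ht.1]
    apply Yf_ne hν hνx (m := ⌈ph ν x / π⌉₊)
    · have := (ph_le_iff hν hx hνx).mpr ht.1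
      linarith
    · have := (ph_le_iff hν hνx hy).mpr ht.2
      linarith
  have hd : ∀ t ∈ Icc x y, HasDerivAt (fun x => Jf ν x / Yf ν x) (-c / (t * Yf ν t ^ 2)) t :=
    fun t ht => quot_deriv hc (by linarith [ht.1]) (hY t ht)
  obtain ⟨t, ht, hs⟩ := exists_hasDerivAt_eq_zero hxy
    (fun x hx => (hd x hx).continuousAt.continuousWithinAt) (by simp [h, h'])
    (fun x hx => hd x ⟨hx.1.le, hx.2.le⟩)
  have ht' : t ∈ Icc x y := ⟨ht.1.le, ht.2.le⟩
  have ht0 : t ≠ 0 := by linarith [ht.1]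
  have hYt := hY t ht'
  have : c = 0 := by
    rw [div_eq_zero_iff] at hs
    rcases hs with hs | hs
    · linarith
    · exfalso
      have : t * Yf ν t ^ 2 ≠ 0 := mul_ne_zero ht0 (pow_ne_zero 2 hYt)
      exact this hs
  exact wronskian_ne hν hc this

lemma window_exists {ν : ℝ} (hν : 0 < ν) {m : ℕ} (hm : 1 ≤ m) :
    ∃ x, ν < x ∧ Jf ν x = 0 ∧ ⌈ph ν x / π⌉₊ = m := by
  have hp := Real.pi_pos
  have hm' : (1:ℝ) ≤ m := by exact_mod_cast hm
  obtain ⟨x1, hx1, e1⟩ := ph_surj (ν := ν) (y := ((m:ℝ) - 1/2) * π) hν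
    (mul_pos (by linarith) hp)
  obtain ⟨x2, hx2, e2⟩ := ph_surj (ν := ν) (y := m * π) hν (by positivity)
  have h12 : x1 < x2 := by
    rw [← ph_lt_iff hν hx1 hx2, e1, e2]; linarith
  have hcont : ContinuousOn (fun x => (-1) ^ m * Jf ν x) (Icc x1 x2) := fun x hx =>
    ((Jf_hasDerivAt ν (by linarith [hx.1])).const_mul _).continuousAt.continuousWithinAt
  have j1 := W2 hν hx1 (m := m) (by rw [e1]; linarith) (by rw [e1])
  have j2 := W3 hν hx2 (m := m) (by rw [e2])
  obtain ⟨x, hx, h0⟩ := intermediate_value_Icc h12.le hcont ⟨j1.le, j2.le⟩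
  have hνx : ν < x := by linarith [hx.1]
  have hJ : Jf ν x = 0 := by
    have : ((-1:ℝ)) ^ m ≠ 0 := pow_ne_zero _ (by norm_num)
    exact (mul_eq_zero.mp h0).resolve_left this
  refine ⟨x, hνx, hJ, ?_⟩
  have g1 := (ph_le_iff hν hx1 hνx).mpr hx.1
  have g2 := (ph_le_iff hν hνx hx2).mpr hx.2
  rw [e1] at g1
  rw [e2] at g2
  rw [Nat.ceil_eq_iff (by omega)]
  constructor
  · rw [lt_div_iff₀ hp]
    push_cast [Nat.cast_sub hm]
    linarith
  · rw [div_le_iff₀ hp]; exact g2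

/-! no small zeros -/

lemma Kint0_bound {ν x : ℝ} (hν : 0 < ν) (hx : 0 < x) :
    0 ≤ Kint 0 (-ν) x ∧ Kint 0 (-ν) x ≤ 1 / (x + ν) := by
  have hpos : 0 < x + ν := by linarith
  constructor
  · apply setIntegral_nonneg measurableSet_Ioi
    intro t _
    positivity
  · have h1 : ∫ t in Ioi (0:ℝ), Real.exp (-(x + ν) * t) = 1 / (x + ν) := by
      rw [integral_exp_mul_Ioi (by linarith) 0]; rw [mul_zero, Real.exp_zero, div_neg, neg_div, neg_neg]
    rw [← h1]
    apply setIntegral_mono_on (Kint_integrable 0 (-ν) hx) _ measurableSet_Ioi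
    · intro t ht
      simp only [pow_zero, one_mul]
      apply Real.exp_le_exp.mpr
      have := sinh_ge_self (le_of_lt ht)
      nlinarith
    · exact integrableOn_exp_mul_Ioi (by linarith) 0

lemma Jf_bdd {ν x : ℝ} (hν : 0 < ν) (hx : 0 < x) : |Jf ν x| ≤ π + 1 / ν := by
  rw [Jf_eq]
  have h1 : |∫ θ in (0:ℝ)..π, Real.cos (x * Real.sin θ - ν * θ)| ≤ π := by
    have := intervalIntegral.norm_integral_le_of_norm_le_const (a := 0) (b := π) (C := 1)
      (f := fun θ => Real.cos (x * Real.sin θ - ν * θ))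
      (fun θ _ => by rw [Real.norm_eq_abs]; exact Real.abs_cos_le_one _)
    rwa [sub_zero, abs_of_pos Real.pi_pos, one_mul, Real.norm_eq_abs] at this
  have h2 : |Real.sin (ν * π) * Kint 0 (-ν) x| ≤ 1 / ν := by
    rw [abs_mul]
    have hK := Kint0_bound hν hx
    have : 1 / (x + ν) ≤ 1 / ν := one_div_le_one_div_of_le hν (by linarith)
    have h3 := Real.abs_sin_le_one (ν * π)
    rw [abs_of_nonneg hK.1]
    calc _ ≤ 1 * Kint 0 (-ν) x := by gcongr; exact hK.1
      _ ≤ _ := by linarith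
  exact (abs_sub _ _).trans (by linarith)

lemma no_small_zero {ν x0 : ℝ} (hν : 0 < ν) (hx0 : 0 < x0) (hx : x0 ≤ ν) : Jf ν x0 ≠ 0 := by
  intro h0
  have hp : x0 * Jf1 ν x0 ≠ 0 := mul_ne_zero hx0.ne' (Jf1_ne hν hx0 h0)
  set p := x0 * Jf1 ν x0 with hpdef
  have hPd : ∀ x, 0 < x → HasDerivAt (fun x => x * Jf1 ν x) ((ν ^ 2 - x ^ 2) / x * Jf ν x) x := by
    intro x hx
    refine ((hasDerivAt_id x).mul (Jf1_hasDerivAt ν hx)).congr_deriv ?_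
    simp only [id]
    field_simp
    ring
  have hcoef : ∀ x ∈ Ioc 0 x0, 0 ≤ (ν ^ 2 - x ^ 2) / x := by
    intro x hx
    apply div_nonneg _ hx.1.le
    nlinarith [hx.1, hx.2]
  have hmem : x0 ∈ Ioc 0 x0 := ⟨hx0, le_refl _⟩
  -- J P is increasing
  have hJP : ∀ x ∈ Ioc 0 x0, HasDerivAt (fun x => Jf ν x * (x * Jf1 ν x))
      (Jf1 ν x * (x * Jf1 ν x) + Jf ν x * ((ν ^ 2 - x ^ 2) / x * Jf ν x)) x :=
    fun x hx => (Jf_hasDerivAt ν hx.1).mul (hPd x hx.1)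
  have m1 := mono_of_hasDeriv (convex_Ioc 0 x0) hJP (by
    intro x hx
    have := hcoef x hx
    have e : Jf1 ν x * (x * Jf1 ν x) + Jf ν x * ((ν ^ 2 - x ^ 2) / x * Jf ν x) =
      x * Jf1 ν x ^ 2 + (ν ^ 2 - x ^ 2) / x * Jf ν x ^ 2 := by ring
    rw [e]
    have := hx.1
    positivity)
  have i1 : ∀ x ∈ Ioc 0 x0, Jf ν x * (x * Jf1 ν x) ≤ 0 := by
    intro x hx
    have := m1 hx hmem hx.2
    simp only [h0, zero_mul] at this
    exact this
  have m2 := mono_of_hasDeriv (f := fun x => -(x * Jf1 ν x) ^ 2)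
    (f' := fun x => -(2 * (x * Jf1 ν x) * ((ν ^ 2 - x ^ 2) / x * Jf ν x))) (convex_Ioc 0 x0)
    (fun x hx => ((hPd x hx.1).pow 2).neg.congr_deriv (by simp)) (by
    intro x hx
    have h1 := hcoef x hx
    have h2 := i1 x hx
    have e : -(2 * (x * Jf1 ν x) * ((ν ^ 2 - x ^ 2) / x * Jf ν x)) =
      2 * ((ν ^ 2 - x ^ 2) / x) * (-(Jf ν x * (x * Jf1 ν x))) := by ring
    rw [e]
    apply mul_nonneg (by positivity); linarith)
  have i2 : ∀ x ∈ Ioc 0 x0, p ^ 2 ≤ (x * Jf1 ν x) ^ 2 := by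
    intro x hx
    have := m2 hx hmem hx.2
    simp only at this
    rw [hpdef]; linarith
  have m3 := mono_of_hasDeriv (convex_Ioc 0 x0)
    (fun x hx => (hJP x hx).sub ((Real.hasDerivAt_log (ne_of_gt hx.1)).const_mul (p ^ 2))) (by
    intro x hx
    have h1 := hcoef x hx
    have h2 := i2 x hx
    have hx1 := hx.1
    have e : Jf1 ν x * (x * Jf1 ν x) + Jf ν x * ((ν ^ 2 - x ^ 2) / x * Jf ν x) - p ^ 2 * x⁻¹ =
      ((x * Jf1 ν x) ^ 2 - p ^ 2) / x + (ν ^ 2 - x ^ 2) / x * Jf ν x ^ 2 := by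
        field_simp
        ring
    rw [e]
    have : 0 ≤ ((x * Jf1 ν x) ^ 2 - p ^ 2) / x := div_nonneg (by linarith) hx1.le
    positivity)
  have i3 : ∀ x ∈ Ioc 0 x0, Jf ν x * (x * Jf1 ν x) ≤ p ^ 2 * (Real.log x - Real.log x0) := by
    intro x hx
    have := m3 hx hmem hx.2
    simp only [Pi.sub_apply, h0, zero_mul] at this
    linarith
  have m4 := mono_of_hasDeriv (f := fun x => p ^ 2 * (Real.log x - Real.log x0) ^ 2 - Jf ν x ^ 2)
    (f' := fun x => p ^ 2 * (2 * (Real.log x - Real.log x0) * x⁻¹) - 2 * Jf ν x * Jf1 ν x)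
    (convex_Ioc 0 x0)
    (fun x hx => (((((Real.hasDerivAt_log (ne_of_gt hx.1)).sub_const (Real.log x0)).pow 2).const_mul
      (p ^ 2)).sub ((Jf_hasDerivAt ν hx.1).pow 2)).congr_deriv (by simp)) (by
    intro x hx
    have h3 := i3 x hx
    have hx1 := hx.1
    have e : p ^ 2 * (2 * (Real.log x - Real.log x0) * x⁻¹) - 2 * Jf ν x * Jf1 ν x =
      2 / x * (p ^ 2 * (Real.log x - Real.log x0) - Jf ν x * (x * Jf1 ν x)) := by
        field_simp
    rw [e]
    apply mul_nonneg (by positivity); linarith)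
  have i4 : ∀ x ∈ Ioc 0 x0, p ^ 2 * (Real.log x - Real.log x0) ^ 2 ≤ Jf ν x ^ 2 := by
    intro x hx
    have := m4 hx hmem hx.2
    simp only [h0, sub_self] at this
    norm_num at this
    linarith
  have hB : 0 < π + 1 / ν := by positivity
  set B := π + 1 / ν with hBdef
  have hp' : 0 < |p| := abs_pos.mpr hp
  set t := (B + 1) / |p| with ht
  have ht0 : 0 < t := by positivity
  have hmem' : x0 * Real.exp (-t) ∈ Ioc 0 x0 := by
    refine ⟨by positivity, ?_⟩
    have : Real.exp (-t) ≤ 1 := Real.exp_le_one_iff.mpr (by linarith)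
    nlinarith
  have h5 := i4 _ hmem'
  rw [Real.log_mul hx0.ne' (Real.exp_pos _).ne', Real.log_exp] at h5
  have h6 := Jf_bdd hν hmem'.1
  have h7 : Jf ν (x0 * Real.exp (-t)) ^ 2 ≤ B ^ 2 := sq_le_sq' (by linarith [abs_le.mp h6])
    (by linarith [abs_le.mp h6])
  have h8 : p ^ 2 * (Real.log x0 + -t - Real.log x0) ^ 2 = (B + 1) ^ 2 := by
    rw [← sq_abs p, ht]; field_simp; ring
  rw [h8] at h5
  nlinarith

/-- The index of a zero is its window number. -/
theorem index_eq {ν j : ℝ} {k : ℕ} (hν : 0 < ν) (hk : 1 ≤ k) (hj : IsKthZero ν k j)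
    (hνj : ν < j) : Jf ν j = 0 ∧ ((k:ℝ) - 1/2) * π < ph ν j ∧ ph ν j < k * π := by
  obtain ⟨hj0, hJ, hcard⟩ := hj
  have hz : ∀ x, besselJ ν x = 0 ↔ Jf ν x = 0 := by
    intro x
    rw [Jf_eq_bessel]
    simp [Real.pi_ne_zero]
  simp only [hz] at hJ hcard
  have hw := zero_window hν hνj hJ
  suffices h : ⌈ph ν j / π⌉₊ = k by
    rw [h] at hw
    exact ⟨hJ, hw.2⟩
  have hp := Real.pi_pos
  have hbig : ∀ x, 0 < x → Jf ν x = 0 → ν < x := by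
    intro x hx h
    by_contra! hcon
    exact no_small_zero hν hx hcon h
  have hmono : ∀ x y, ν < x → ν < y → x ≤ y → ⌈ph ν x / π⌉₊ ≤ ⌈ph ν y / π⌉₊ := by
    intro x y hx hy hxy
    apply Nat.ceil_le_ceil
    have := (ph_le_iff hν hx hy).mpr hxy
    gcongr
  have hinj : InjOn (fun x => ⌈ph ν x / π⌉₊) {x : ℝ | 0 < x ∧ x < j ∧ Jf ν x = 0} := by
    intro x hx y hy hxy
    have hx' := hbig x hx.1 hx.2.2
    have hy' := hbig y hy.1 hy.2.2
    rcases lt_trichotomy x y with h | h | h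
    · exact absurd hxy (window_unique hν hx' h hx.2.2 hy.2.2)
    · exact h
    · exact absurd hxy.symm (window_unique hν hy' h hy.2.2 hx.2.2)
  have himg : Set.image (fun x => ⌈ph ν x / π⌉₊) {x : ℝ | 0 < x ∧ x < j ∧ Jf ν x = 0} =
      Ico 1 ⌈ph ν j / π⌉₊ := by
    ext m
    constructor
    · rintro ⟨x, hx, rfl⟩
      have hx' := hbig x hx.1 hx.2.2
      refine ⟨(zero_window hν hx' hx.2.2).1, ?_⟩
      exact lt_of_le_of_ne (hmono x j hx' hνj hx.2.1.le)
        (window_unique hν hx' hx.2.1 hx.2.2 hJ)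
    · rintro ⟨hm1, hm2⟩
      obtain ⟨x, hx, h0, hm⟩ := window_exists hν hm1
      refine ⟨x, ⟨hν.trans hx, ?_, h0⟩, hm⟩
      by_contra! hcon
      have := hmono j x hνj hx hcon
      omega
  have h1 := Set.ncard_image_of_injOn hinj
  rw [himg, hcard, ← Nat.card_coe_set_eq, Nat.card_eq_fintype_card, Fintype.card_ofFinset,
    Nat.card_Ico] at h1
  have := hw.1
  omega


/-! ### Part 4: behaviour at infinity -/

/-- Folded oscillatory integral. -/
noncomputable def Gf (ν x : ℝ) : ℂ :=
  ∫ τ in (0:ℝ)..(π / 2), ((Real.cos (ν * τ) : ℝ) : ℂ) *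
    Complex.exp (((x * Real.cos τ : ℝ) : ℂ) * Complex.I)

lemma fold_integral (ν x : ℝ) : (∫ θ in (0:ℝ)..π, Real.cos (x * Real.sin θ - ν * θ)) =
    2 * (Complex.exp (((-(ν * π / 2) : ℝ) : ℂ) * Complex.I) * Gf ν x).re := by
  set f : ℝ → ℝ := fun θ => Real.cos (x * Real.sin θ - ν * θ) with hf
  have hfc : Continuous f := by rw [hf]; fun_prop
  have h1 : (∫ θ in (0:ℝ)..π, f θ) = (∫ τ in (0:ℝ)..(π/2), f (π / 2 - τ)) +
      ∫ τ in (0:ℝ)..(π/2), f (π / 2 + τ) := by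
    rw [intervalIntegral.integral_comp_sub_left f (π / 2),
      intervalIntegral.integral_comp_add_left f (π / 2)]
    rw [sub_self, sub_zero, add_zero, add_halves]
    exact (intervalIntegral.integral_add_adjacent_intervals (hfc.intervalIntegrable _ _)
      (hfc.intervalIntegrable _ _)).symm
  rw [h1, ← intervalIntegral.integral_add
    ((by fun_prop : Continuous fun τ => f (π / 2 - τ)).intervalIntegrable _ _)
    ((by fun_prop : Continuous fun τ => f (π / 2 + τ)).intervalIntegrable _ _)]
  rw [Gf, ← intervalIntegral.integral_const_mul]
  have h := (Complex.reCLM.intervalIntegral_comp_comm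
    ((by fun_prop : Continuous fun τ : ℝ => Complex.exp (((-(ν * π / 2) : ℝ) : ℂ) * Complex.I) *
      (((Real.cos (ν * τ) : ℝ) : ℂ) *
    Complex.exp (((x * Real.cos τ : ℝ) : ℂ) * Complex.I))).intervalIntegrable
      (μ := volume) 0 (π / 2)))
  simp only [Complex.reCLM_apply] at h
  rw [← h, ← intervalIntegral.integral_const_mul]
  congr 1
  ext τ
  have e : Complex.exp (((-(ν * π / 2) : ℝ) : ℂ) * Complex.I) *
      (((Real.cos (ν * τ) : ℝ) : ℂ) * Complex.exp (((x * Real.cos τ : ℝ) : ℂ) * Complex.I)) =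
      ((Real.cos (ν * τ) : ℝ) : ℂ) *
        Complex.exp (((x * Real.cos τ - ν * π / 2 : ℝ) : ℂ) * Complex.I) := by
    rw [mul_left_comm, ← Complex.exp_add]
    congr 2
    push_cast
    ring
  rw [e, Complex.re_ofReal_mul, Complex.exp_ofReal_mul_I_re, hf]
  simp only
  rw [Real.sin_pi_div_two_sub, add_comm (π / 2) τ, Real.sin_add_pi_div_two,
    show x * Real.cos τ - ν * (π / 2 - τ) = (x * Real.cos τ - ν * π / 2) + ν * τ by ring,
    show x * Real.cos τ - ν * (τ + π / 2) = (x * Real.cos τ - ν * π / 2) - ν * τ by ring,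
    Real.cos_add, Real.cos_sub (x * Real.cos τ - ν * π / 2) (ν * τ)]
  ring

lemma one_sub_cos_le (y : ℝ) : |1 - Real.cos y| ≤ y ^ 2 / 2 := by
  rw [abs_of_nonneg (by linarith [Real.cos_le_one y])]
  linarith [Real.one_sub_sq_div_two_le_cos (x := y)]

/-- Replacing `ν` by `1/2` costs `O(1/x)`. -/
lemma G_compare (ν : ℝ) : ∃ K : ℝ, ∀ x, 1 ≤ x → ‖Gf ν x - Gf (1/2) x‖ ≤ K / x := by
  set b : ℝ := ν ^ 2 + 1 / 4 with hb
  have hb0 : 0 < b := by positivity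
  refine ⟨2 + (8 * b + 8 * b * 2), fun x hx => ?_⟩
  have hx0 : 0 < x := by linarith
  have hpi := Real.pi_gt_three
  have hpi4 := Real.pi_lt_four
  set r : ℝ → ℝ := fun τ => Real.cos (ν * τ) - Real.cos (1 / 2 * τ) with hr
  set r' : ℝ → ℝ := fun τ => -ν * Real.sin (ν * τ) + 1 / 2 * Real.sin (1 / 2 * τ) with hr'
  have hrd : ∀ τ, HasDerivAt r (r' τ) τ := by
    intro τ
    have e1 : HasDerivAt (fun τ => ν * τ) ν τ := by
      exact ((hasDerivAt_id τ).const_mul ν).congr_deriv (by simp)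
    have e2 : HasDerivAt (fun τ : ℝ => 1 / 2 * τ) (1 / 2) τ := by
      exact ((hasDerivAt_id τ).const_mul (1/2 : ℝ)).congr_deriv (by simp)
    refine (e1.cos.sub e2.cos).congr_deriv ?_
    rw [hr']; ring
  have rb : ∀ τ, |r τ| ≤ b * τ ^ 2 := by
    intro τ
    have h1 := one_sub_cos_le (ν * τ)
    have h2 := one_sub_cos_le (1 / 2 * τ)
    have : r τ = (1 - Real.cos (1 / 2 * τ)) - (1 - Real.cos (ν * τ)) := by rw [hr]; ring
    rw [this]
    refine (abs_sub _ _).trans ?_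
    rw [hb]
    nlinarith [sq_nonneg τ, sq_nonneg (ν * τ)]
  have rb' : ∀ τ, 0 ≤ τ → |r' τ| ≤ b * τ := by
    intro τ hτ
    have h1 : |Real.sin (ν * τ)| ≤ |ν * τ| := Real.abs_sin_le_abs
    have h2 : |Real.sin (1 / 2 * τ)| ≤ |1 / 2 * τ| := Real.abs_sin_le_abs
    rw [abs_mul, abs_of_nonneg hτ] at h1 h2
    rw [hr']
    refine (abs_add_le _ _).trans ?_
    rw [abs_mul, abs_mul, abs_neg]
    have h3 : |ν| * |Real.sin (ν * τ)| ≤ |ν| * (|ν| * τ) := by gcongr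
    have h4 : |(1:ℝ) / 2| * |Real.sin (1 / 2 * τ)| ≤ |(1:ℝ) / 2| * (|1 / 2| * τ) := by gcongr
    have h5 : |(1:ℝ)/2| = 1 / 2 := abs_of_pos (by norm_num)
    rw [h5] at h4 ⊢
    have h6 : |ν| * (|ν| * τ) = ν ^ 2 * τ := by rw [← mul_assoc, ← sq, sq_abs]
    rw [hb]; linarith
  have hsin : ∀ τ, 0 < τ → τ ≤ π / 2 → τ / 2 ≤ Real.sin τ := by
    intro τ h1 h2
    have h3 := Real.mul_le_sin h1.le h2
    have : 1 / 2 ≤ 2 / π := by rw [div_le_div_iff₀ (by norm_num) (by positivity)]; linarith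
    nlinarith
  set ε := 1 / x with hε
  have hε0 : 0 < ε := by positivity
  have hε1 : ε ≤ 1 := by rw [hε, div_le_one hx0]; exact hx
  set ρ : ℝ → ℝ := fun τ => r τ / Real.sin τ with hρ
  set ρ' : ℝ → ℝ := fun τ => (r' τ * Real.sin τ - r τ * Real.cos τ) / Real.sin τ ^ 2 with hρ'
  have hsp : ∀ τ ∈ Icc ε (π / 2), 0 < Real.sin τ := by
    intro τ hτ
    have := hsin τ (by linarith [hτ.1]) hτ.2
    linarith [hτ.1]
  have hρd : ∀ τ ∈ Icc ε (π / 2), HasDerivAt ρ (ρ' τ) τ := fun τ hτ =>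
    (hrd τ).div (Real.hasDerivAt_sin τ) (hsp τ hτ).ne'
  have ρb : ∀ τ ∈ Icc ε (π / 2), |ρ τ| ≤ 4 * b := by
    intro τ hτ
    have hs := hsp τ hτ
    have h1 := hsin τ (by linarith [hτ.1]) hτ.2
    have h2 := rb τ
    have h3 : 0 < τ := by linarith [hτ.1]
    have h4 := hτ.2
    rw [hρ]
    simp only
    rw [abs_div, abs_of_pos hs, div_le_iff₀ hs]
    have : b * τ ^ 2 ≤ 4 * b * (τ / 2) := by
      have : τ ^ 2 ≤ 2 * τ := by nlinarith
      nlinarith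
    have : 4 * b * (τ / 2) ≤ 4 * b * Real.sin τ := by gcongr
    linarith
  have ρb' : ∀ τ ∈ Icc ε (π / 2), |ρ' τ| ≤ 8 * b := by
    intro τ hτ
    have hs := hsp τ hτ
    have h1 := hsin τ (by linarith [hτ.1]) hτ.2
    have h2 := rb τ
    have h3 : 0 < τ := by linarith [hτ.1]
    have h4 := rb' τ h3.le
    have h5 : Real.sin τ ≤ τ := Real.sin_le h3.le
    rw [hρ']
    simp only
    rw [abs_div, abs_of_pos (by positivity : 0 < Real.sin τ ^ 2), div_le_iff₀ (by positivity)]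
    have h6 : |r' τ * Real.sin τ - r τ * Real.cos τ| ≤ b * τ * τ + b * τ ^ 2 * 1 := by
      refine (abs_sub _ _).trans ?_
      rw [abs_mul, abs_mul, abs_of_pos hs]
      have := Real.abs_cos_le_one τ
      gcongr
    have h7 : (τ / 2) ^ 2 ≤ Real.sin τ ^ 2 := by gcongr
    nlinarith
  set e : ℝ → ℂ := fun τ => Complex.exp (((x * Real.cos τ : ℝ) : ℂ) * Complex.I) with he
  have hec : Continuous e := by rw [he]; fun_prop
  have hen : ∀ τ, ‖e τ‖ = 1 := fun τ => Complex.norm_exp_ofReal_mul_I _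
  have hed : ∀ τ, HasDerivAt e (-(x * Real.sin τ : ℝ) * Complex.I * e τ) τ := by
    intro τ
    have e1 : HasDerivAt (fun τ => x * Real.cos τ) (x * -Real.sin τ) τ :=
      (Real.hasDerivAt_cos τ).const_mul x
    refine (e1.ofReal_comp.mul_const Complex.I).cexp.congr_deriv ?_
    rw [he]
    push_cast
    ring
  have hrc : Continuous r := by rw [hr]; fun_prop
  have hdiff : Gf ν x - Gf (1/2) x = (∫ τ in (0:ℝ)..ε, (r τ : ℂ) * e τ) +
      ∫ τ in ε..(π/2), (r τ : ℂ) * e τ := by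
    rw [intervalIntegral.integral_add_adjacent_intervals
      ((by fun_prop : Continuous fun τ => (r τ : ℂ) * e τ).intervalIntegrable _ _)
      ((by fun_prop : Continuous fun τ => (r τ : ℂ) * e τ).intervalIntegrable _ _),
      Gf, Gf, ← intervalIntegral.integral_sub]
    · congr 1
      ext τ
      rw [hr, he]
      push_cast
      ring
    · apply Continuous.intervalIntegrable; fun_prop
    · apply Continuous.intervalIntegrable; fun_prop
  have hI1 : ‖∫ τ in (0:ℝ)..ε, (r τ : ℂ) * e τ‖ ≤ 2 / x := by
    have := intervalIntegral.norm_integral_le_of_norm_le_const (a := 0) (b := ε) (C := 2)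
      (f := fun τ => (r τ : ℂ) * e τ) (fun τ _ => by
        rw [norm_mul, hen, mul_one, Complex.norm_real, Real.norm_eq_abs, hr]
        refine (abs_sub _ _).trans ?_
        linarith [Real.abs_cos_le_one (ν * τ), Real.abs_cos_le_one (1/2 * τ)])
    rw [sub_zero, abs_of_pos hε0] at this
    calc _ ≤ _ := this
      _ = _ := by rw [hε]; ring
  have hεp : ε ≤ π / 2 := by linarith
  have hu : uIcc ε (π / 2) = Icc ε (π / 2) := uIcc_of_le hεp
  have hρ'c : ContinuousOn ρ' (Icc ε (π / 2)) := by
    rw [hρ']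
    apply ContinuousOn.div
    · rw [hr', hr]; fun_prop
    · fun_prop
    · intro τ hτ; exact pow_ne_zero 2 (hsp τ hτ).ne'
  have hparts := intervalIntegral.integral_mul_deriv_eq_deriv_mul (a := ε) (b := π / 2)
    (u := fun τ => (ρ τ : ℂ)) (u' := fun τ => (ρ' τ : ℂ)) (v := e)
    (v' := fun τ => -(x * Real.sin τ : ℝ) * Complex.I * e τ)
    (fun τ hτ => (hρd τ (hu ▸ hτ)).ofReal_comp) (fun τ _ => hed τ)
    (by
      apply ContinuousOn.intervalIntegrable
      rw [hu]
      exact Complex.continuous_ofReal.comp_continuousOn hρ'c)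
    (by apply Continuous.intervalIntegrable; fun_prop)
  have hlhs : (∫ τ in ε..(π/2), (ρ τ : ℂ) * (-(x * Real.sin τ : ℝ) * Complex.I * e τ)) =
      (-(x:ℂ) * Complex.I) * ∫ τ in ε..(π/2), (r τ : ℂ) * e τ := by
    rw [← intervalIntegral.integral_const_mul]
    apply intervalIntegral.integral_congr
    intro τ hτ
    rw [hu] at hτ
    have hs := hsp τ hτ
    have : (ρ τ : ℂ) * (Real.sin τ : ℂ) = r τ := by
      rw [← Complex.ofReal_mul, hρ]
      simp only
      rw [div_mul_cancel₀ _ hs.ne']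
    simp only
    rw [← this]
    push_cast
    ring
  rw [hlhs] at hparts
  have hI2 : ‖∫ τ in ε..(π/2), (r τ : ℂ) * e τ‖ ≤ (8 * b + 8 * b * 2) / x := by
    have hn := congrArg norm hparts
    rw [norm_mul, norm_mul, norm_neg, Complex.norm_I, mul_one, Complex.norm_real,
      Real.norm_eq_abs, abs_of_pos hx0] at hn
    rw [le_div_iff₀ hx0, mul_comm, hn]
    have n1 : ‖(ρ (π/2) : ℂ) * e (π/2)‖ ≤ 4 * b := by
      rw [norm_mul, hen, mul_one, Complex.norm_real, Real.norm_eq_abs]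
      exact ρb _ ⟨hεp, le_refl _⟩
    have n2 : ‖(ρ ε : ℂ) * e ε‖ ≤ 4 * b := by
      rw [norm_mul, hen, mul_one, Complex.norm_real, Real.norm_eq_abs]
      exact ρb _ ⟨le_refl _, hεp⟩
    have n3 : ‖∫ τ in ε..(π/2), (ρ' τ : ℂ) * e τ‖ ≤ 8 * b * 2 := by
      have := intervalIntegral.norm_integral_le_of_norm_le_const (a := ε) (b := π / 2) (C := 8 * b)
        (f := fun τ => (ρ' τ : ℂ) * e τ) (fun τ hτ => by
          rw [uIoc_of_le hεp] at hτ
          rw [norm_mul, hen, mul_one, Complex.norm_real, Real.norm_eq_abs]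
          exact ρb' τ ⟨hτ.1.le, hτ.2⟩)
      refine this.trans ?_
      rw [abs_of_nonneg (by linarith)]
      gcongr
      linarith
    calc _ ≤ ‖(ρ (π/2) : ℂ) * e (π/2) - (ρ ε : ℂ) * e ε‖ +
          ‖∫ τ in ε..(π/2), (ρ' τ : ℂ) * e τ‖ := norm_sub_le _ _
      _ ≤ (‖(ρ (π/2) : ℂ) * e (π/2)‖ + ‖(ρ ε : ℂ) * e ε‖) + _ := by
          gcongr; exact norm_sub_le _ _
      _ ≤ _ := by linarith
  rw [hdiff]
  calc _ ≤ _ := norm_add_le _ _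
    _ ≤ 2 / x + (8 * b + 8 * b * 2) / x := add_le_add hI1 hI2
    _ = _ := by ring

/-- Incomplete Fresnel integral. -/
noncomputable def Hf (x : ℝ) : ℂ :=
  ∫ y in (0:ℝ)..√x, Complex.exp (((-y ^ 2 : ℝ) : ℂ) * Complex.I)

lemma G_half {x : ℝ} (hx : 0 < x) :
    (√x : ℂ) * Gf (1/2) x = (√2 : ℂ) * Complex.exp ((x : ℂ) * Complex.I) * Hf x := by
  have hd : ∀ τ : ℝ, HasDerivAt (fun τ => √(2 * x) * Real.sin (τ / 2))
      (√(2 * x) * Real.cos (τ / 2) / 2) τ := by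
    intro τ
    have e1 : HasDerivAt (fun τ : ℝ => τ / 2) (1 / 2) τ := (hasDerivAt_id τ).div_const 2
    refine (e1.sin.const_mul (√(2 * x))).congr_deriv ?_
    ring
  have h := intervalIntegral.integral_deriv_smul_comp (a := 0) (b := π / 2)
    (f := fun τ => √(2 * x) * Real.sin (τ / 2))
    (f' := fun τ => √(2 * x) * Real.cos (τ / 2) / 2)
    (g := fun y : ℝ => Complex.exp (((-y ^ 2 : ℝ) : ℂ) * Complex.I))
    (fun τ _ => hd τ) (by fun_prop) (by fun_prop)
  have hend : √(2 * x) * Real.sin (π / 2 / 2) = √x := by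
    rw [show π / 2 / 2 = π / 4 by ring, Real.sin_pi_div_four, Real.sqrt_mul (by norm_num)]
    have := Real.mul_self_sqrt (show (0:ℝ) ≤ 2 by norm_num)
    linear_combination √x / 2 * this
  rw [hend, zero_div, Real.sin_zero, mul_zero] at h
  rw [Hf, ← h, Gf, ← intervalIntegral.integral_const_mul, ← intervalIntegral.integral_const_mul]
  congr 1
  ext τ
  have hsq : (√(2 * x) * Real.sin (τ / 2)) ^ 2 = x * (1 - Real.cos τ) := by
    rw [mul_pow, Real.sq_sqrt (by positivity), Real.sin_sq_eq_half_sub]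
    rw [show 2 * (τ / 2) = τ by ring]
    ring
  simp only [Function.comp, hsq]
  have e2 : Complex.exp ((x * Real.cos τ : ℝ) * Complex.I) = Complex.exp ((x : ℂ) * Complex.I) *
      Complex.exp (((-(x * (1 - Real.cos τ)) : ℝ) : ℂ) * Complex.I) := by
    rw [← Complex.exp_add]
    congr 1
    push_cast
    ring
  rw [e2, Complex.real_smul, Real.sqrt_mul (by norm_num)]
  have h2 : (√2 : ℂ) * (√2 : ℂ) = 2 := by
    rw [← Complex.ofReal_mul, Real.mul_self_sqrt (by norm_num)]; norm_num
  rw [show 1 / 2 * τ = τ / 2 by ring]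
  push_cast
  linear_combination (-(√x : ℂ) * Complex.cos (τ / 2) / 2 * Complex.exp ((x : ℂ) * Complex.I) *
      Complex.exp ((-(x * (1 - Complex.cos τ))) * Complex.I)) * h2

lemma H_slow : Tendsto (fun x => Hf (x + π / 2) - Hf x) atTop (𝓝 0) := by
  have hz : Tendsto (fun x : ℝ => (π / 2) / √x) atTop (𝓝 0) :=
    tendsto_const_nhds.div_atTop Real.tendsto_sqrt_atTop
  apply squeeze_zero_norm' _ hz
  filter_upwards [eventually_gt_atTop 0] with x hx
  have hc : Continuous fun y : ℝ => Complex.exp (((-y ^ 2 : ℝ) : ℂ) * Complex.I) := by fun_prop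
  rw [Hf, Hf, intervalIntegral.integral_interval_sub_left (hc.intervalIntegrable _ _)
    (hc.intervalIntegrable _ _)]
  refine (intervalIntegral.norm_integral_le_of_norm_le_const (C := 1) (fun y _ =>
    (Complex.norm_exp_ofReal_mul_I _).le)).trans ?_
  have hpi := Real.pi_pos
  have h1 : √x ≤ √(x + π / 2) := Real.sqrt_le_sqrt (by linarith)
  have h0 : 0 < √x := Real.sqrt_pos.mpr hx
  rw [one_mul, abs_of_nonneg (by linarith), le_div_iff₀ h0]
  have a1 := Real.sq_sqrt hx.le
  have a2 := Real.sq_sqrt (show 0 ≤ x + π / 2 by linarith)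
  nlinarith

/-- asymptotics with the incomplete Fresnel integral -/
lemma Jf_fresnel {ν : ℝ} (hν : 0 < ν) : Tendsto (fun x => √x * Jf ν x -
    2 * √2 * (Complex.exp (((x - ν * π / 2 : ℝ) : ℂ) * Complex.I) * Hf x).re) atTop (𝓝 0) := by
  obtain ⟨K, hK⟩ := G_compare ν
  have hz : Tendsto (fun x : ℝ => (2 * K + 1) / √x) atTop (𝓝 0) :=
    tendsto_const_nhds.div_atTop Real.tendsto_sqrt_atTop
  apply squeeze_zero_norm' _ hz
  filter_upwards [eventually_ge_atTop 1] with x hx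
  have hx0 : 0 < x := by linarith
  have h0 : 0 < √x := Real.sqrt_pos.mpr hx0
  have hs := Real.mul_self_sqrt hx0.le
  set E := Complex.exp (((-(ν * π / 2) : ℝ) : ℂ) * Complex.I) with hE
  have hEn : ‖E‖ = 1 := Complex.norm_exp_ofReal_mul_I _
  have e1 : 2 * √2 * (Complex.exp (((x - ν * π / 2 : ℝ) : ℂ) * Complex.I) * Hf x).re =
      √x * (2 * (E * Gf (1/2) x).re) := by
    have : Complex.exp (((x - ν * π / 2 : ℝ) : ℂ) * Complex.I) =
        E * Complex.exp ((x : ℂ) * Complex.I) := by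
      rw [hE, ← Complex.exp_add]; congr 1; push_cast; ring
    have h3 : √2 * (Complex.exp (((x - ν * π / 2 : ℝ) : ℂ) * Complex.I) * Hf x).re =
        √x * (E * Gf (1/2) x).re := by
      rw [← Complex.re_ofReal_mul, ← Complex.re_ofReal_mul, this]
      congr 1
      linear_combination -E * G_half hx0
    linear_combination 2 * h3
  rw [e1, Jf_eq, fold_integral, ← hE]
  have e2 : √x * (2 * (E * Gf ν x).re - Real.sin (ν * π) * Kint 0 (-ν) x) -
      √x * (2 * (E * Gf (1/2) x).re) = √x * (2 * (E * (Gf ν x - Gf (1/2) x)).re -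
        Real.sin (ν * π) * Kint 0 (-ν) x) := by
    rw [mul_sub E, Complex.sub_re]; ring
  rw [e2, norm_mul, Real.norm_of_nonneg h0.le, le_div_iff₀ h0]
  have b1 : |(E * (Gf ν x - Gf (1/2) x)).re| ≤ K / x := by
    refine (Complex.abs_re_le_norm _).trans ?_
    rw [norm_mul, hEn, one_mul]
    exact hK x hx
  have b2 : |Real.sin (ν * π) * Kint 0 (-ν) x| ≤ 1 / x := by
    rw [abs_mul]
    have hK := Kint0_bound hν hx0
    have : 1 / (x + ν) ≤ 1 / x := one_div_le_one_div_of_le hx0 (by linarith)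
    have h3 := Real.abs_sin_le_one (ν * π)
    rw [abs_of_nonneg hK.1]
    calc _ ≤ 1 * Kint 0 (-ν) x := by gcongr; exact hK.1
      _ ≤ _ := by linarith
  have b3 : ‖2 * (E * (Gf ν x - Gf (1/2) x)).re - Real.sin (ν * π) * Kint 0 (-ν) x‖ ≤
      (2 * K + 1) / x := by
    rw [Real.norm_eq_abs]
    refine (abs_sub _ _).trans ?_
    rw [abs_mul, abs_of_pos (by norm_num : (0:ℝ) < 2)]
    calc _ ≤ 2 * (K / x) + 1 / x := by linarith
      _ = _ := by ring
  calc _ = x * ‖2 * (E * (Gf ν x - Gf (1/2) x)).re - Real.sin (ν * π) * Kint 0 (-ν) x‖ := by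
        rw [mul_right_comm, hs]
    _ ≤ x * ((2 * K + 1) / x) := by gcongr
    _ = _ := by field_simp

/-- The explicit case of order one half. -/
lemma Jf_half : ∃ q : ℝ, ∀ x, 0 < x → √x * Jf (1/2) x = q * Real.sin x := by
  have hsd : ∀ x : ℝ, 0 < x → HasDerivAt (fun x => √x) (1 / (2 * √x)) x := fun x hx =>
    Real.hasDerivAt_sqrt hx.ne'
  set y : ℝ → ℝ := fun x => √x * Jf (1/2) x with hy
  set z : ℝ → ℝ := fun x => 1 / (2 * √x) * Jf (1/2) x + √x * Jf1 (1/2) x with hz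
  have hyd : ∀ x, 0 < x → HasDerivAt y (z x) x := fun x hx =>
    (hsd x hx).mul (Jf_hasDerivAt _ hx)
  have hzd : ∀ x, 0 < x → HasDerivAt z (-y x) x := by
    intro x hx
    have h0 : 0 < √x := Real.sqrt_pos.mpr hx
    have hs : √x ^ 2 = x := Real.sq_sqrt hx.le
    have d1 : HasDerivAt (fun x => 1 / (2 * √x)) (-1 / (4 * √x ^ 3)) x := by
      refine ((hasDerivAt_const x (1:ℝ)).div ((hsd x hx).const_mul 2)
        (by positivity)).congr_deriv ?_
      field_simp
      ring
    refine ((d1.mul (Jf_hasDerivAt (1/2) hx)).add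
      ((hsd x hx).mul (Jf1_hasDerivAt (1/2) hx))).congr_deriv ?_
    rw [hy]
    simp only
    generalize Jf (1/2) x = a at *
    generalize Jf1 (1/2) x = b at *
    have h4 : x = √x ^ 2 := hs.symm
    generalize √x = s at *
    subst h4
    field_simp
    ring
  have c1 : ∀ x, 0 < x → y x * Real.sin x + z x * Real.cos x =
      y 1 * Real.sin 1 + z 1 * Real.cos 1 := by
    intro x hx
    have hd : ∀ x, 0 < x → HasDerivAt (fun x => y x * Real.sin x + z x * Real.cos x) 0 x := by
      intro x hx
      refine (((hyd x hx).mul (Real.hasDerivAt_sin x)).add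
        ((hzd x hx).mul (Real.hasDerivAt_cos x))).congr_deriv ?_
      ring
    exact isOpen_Ioi.is_const_of_deriv_eq_zero (isPreconnected_Ioi (a := (0:ℝ)))
      (f := fun x => y x * Real.sin x + z x * Real.cos x)
      (fun y hy => (hd y hy).differentiableAt.differentiableWithinAt)
      (fun y hy => (hd y hy).deriv) (x := x) (y := 1) hx (by simp)
  have c2 : ∀ x, 0 < x → y x * Real.cos x - z x * Real.sin x =
      y 1 * Real.cos 1 - z 1 * Real.sin 1 := by
    intro x hx
    have hd : ∀ x, 0 < x → HasDerivAt (fun x => y x * Real.cos x - z x * Real.sin x) 0 x := by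
      intro x hx
      refine (((hyd x hx).mul (Real.hasDerivAt_cos x)).sub
        ((hzd x hx).mul (Real.hasDerivAt_sin x))).congr_deriv ?_
      ring
    exact isOpen_Ioi.is_const_of_deriv_eq_zero (isPreconnected_Ioi (a := (0:ℝ)))
      (f := fun x => y x * Real.cos x - z x * Real.sin x)
      (fun y hy => (hd y hy).differentiableAt.differentiableWithinAt)
      (fun y hy => (hd y hy).deriv) (x := x) (y := 1) hx (by simp)
  set q := y 1 * Real.sin 1 + z 1 * Real.cos 1 with hq
  set p := y 1 * Real.cos 1 - z 1 * Real.sin 1 with hp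
  have hform : ∀ x, 0 < x → y x = q * Real.sin x + p * Real.cos x := by
    intro x hx
    rw [← c1 x hx, ← c2 x hx]
    linear_combination -y x * Real.sin_sq_add_cos_sq x
  have hlim1 : Tendsto y (𝓝[>] 0) (𝓝 0) := by
    have hb : Tendsto (fun x : ℝ => √x * (π + 1 / (1/2))) (𝓝[>] 0) (𝓝 0) := by
      apply tendsto_nhdsWithin_of_tendsto_nhds
      have : Continuous (fun x : ℝ => √x * (π + 1 / (1/2))) := by fun_prop
      simpa using this.tendsto 0
    apply squeeze_zero_norm' _ hb
    filter_upwards [self_mem_nhdsWithin] with x hx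
    rw [hy]
    simp only
    rw [norm_mul, Real.norm_of_nonneg (Real.sqrt_nonneg x), Real.norm_eq_abs]
    have := Jf_bdd (ν := 1/2) (by norm_num) hx
    gcongr
  have hlim2 : Tendsto y (𝓝[>] 0) (𝓝 p) := by
    have : Tendsto (fun x => q * Real.sin x + p * Real.cos x) (𝓝[>] 0) (𝓝 p) := by
      apply tendsto_nhdsWithin_of_tendsto_nhds
      have : Continuous (fun x => q * Real.sin x + p * Real.cos x) := by fun_prop
      simpa using this.tendsto 0
    refine this.congr' ?_
    filter_upwards [self_mem_nhdsWithin] with x hx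
    exact (hform x hx).symm
  have hp0 : p = 0 := tendsto_nhds_unique hlim2 hlim1
  refine ⟨q, fun x hx => ?_⟩
  have := hform x hx
  rw [hp0, zero_mul, add_zero] at this
  exact this


/-! ### Part 5: the refined position of the zeros -/

/-- fourth root of `x ^ 2 - ν ^ 2` -/
noncomputable def sq4 (ν x : ℝ) : ℝ := √(√(x ^ 2 - ν ^ 2))

lemma sq4_pos {ν x : ℝ} (hν : 0 < ν) (hx : ν < x) : 0 < sq4 ν x :=
  Real.sqrt_pos.mpr (Q_pos hν hx)

lemma sq4_sq {ν x : ℝ} (hν : 0 < ν) (hx : ν < x) : sq4 ν x ^ 2 = √(x ^ 2 - ν ^ 2) :=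
  Real.sq_sqrt (Q_pos hν hx).le

lemma sq4_four {ν x : ℝ} (hν : 0 < ν) (hx : ν < x) : sq4 ν x ^ 4 = x ^ 2 - ν ^ 2 := by
  rw [← Q_sq hν hx, ← sq4_sq hν hx]; ring

lemma sq4_hasDerivAt {ν x : ℝ} (hν : 0 < ν) (hx : ν < x) :
    HasDerivAt (sq4 ν) (x / (2 * sq4 ν x ^ 3)) x := by
  have h := (Q_hasDerivAt hν hx).sqrt (Q_pos hν hx).ne'
  refine HasDerivAt.congr_deriv h ?_
  have hs := sq4_pos hν hx
  rw [← sq4_sq hν hx, Real.sqrt_sq hs.le]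
  field_simp

/-- normalized solution -/
noncomputable def uf (ν x : ℝ) : ℝ := sq4 ν x * Jf ν x
/-- its derivative in the phase variable -/
noncomputable def vf (ν x : ℝ) : ℝ :=
  x ^ 2 / (2 * sq4 ν x ^ 5) * Jf ν x + x / sq4 ν x * Jf1 ν x
/-- perturbation -/
noncomputable def om (ν x : ℝ) : ℝ := (x ^ 3 + 4 * ν ^ 2 * x) / (4 * sq4 ν x ^ 10)
/-- primitive of the perturbation -/
noncomputable def Ps (ν x : ℝ) : ℝ := 1 / (4 * sq4 ν x ^ 2) + 5 * ν ^ 2 / (12 * sq4 ν x ^ 6)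

lemma uf_hasDerivAt {ν x : ℝ} (hν : 0 < ν) (hx : ν < x) :
    HasDerivAt (uf ν) (sq4 ν x ^ 2 / x * vf ν x) x := by
  have hx0 : 0 < x := hν.trans hx
  have hs := sq4_pos hν hx
  refine ((sq4_hasDerivAt hν hx).mul (Jf_hasDerivAt ν hx0)).congr_deriv ?_
  rw [vf]
  field_simp

lemma vf_hasDerivAt {ν x : ℝ} (hν : 0 < ν) (hx : ν < x) :
    HasDerivAt (vf ν) (-(sq4 ν x ^ 2 / x * uf ν x) - om ν x * uf ν x) x := by
  have hx0 : 0 < x := hν.trans hx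
  have hs := sq4_pos hν hx
  have h4 := sq4_four hν hx
  have hsd := sq4_hasDerivAt hν hx
  have d1 : HasDerivAt (fun x => x ^ 2 / (2 * sq4 ν x ^ 5))
      (x / sq4 ν x ^ 5 - 5 * x ^ 3 / (4 * sq4 ν x ^ 9)) x := by
    refine (((hasDerivAt_id x).pow 2).div ((hsd.pow 5).const_mul 2) (by simp; positivity)).congr_deriv ?_
    simp
    field_simp
    ring
  have d2 : HasDerivAt (fun x => x / sq4 ν x)
      (1 / sq4 ν x - x ^ 2 / (2 * sq4 ν x ^ 5)) x := by
    refine ((hasDerivAt_id x).div hsd hs.ne').congr_deriv ?_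
    simp
    field_simp
  refine ((d1.mul (Jf_hasDerivAt ν hx0)).add (d2.mul (Jf1_hasDerivAt ν hx0))).congr_deriv ?_
  have hν2 : ν ^ 2 = x ^ 2 - sq4 ν x ^ 4 := by linarith
  rw [uf, om, hν2]
  field_simp
  ring

lemma Ps_hasDerivAt {ν x : ℝ} (hν : 0 < ν) (hx : ν < x) :
    HasDerivAt (Ps ν) (-om ν x) x := by
  have hx0 : 0 < x := hν.trans hx
  have hs := sq4_pos hν hx
  have h4 := sq4_four hν hx
  have hsd := sq4_hasDerivAt hν hx
  have d1 := (hasDerivAt_const x (1:ℝ)).div ((hsd.pow 2).const_mul 4) (by simp; positivity)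
  have d2 := (hasDerivAt_const x (5 * ν ^ 2)).div ((hsd.pow 6).const_mul 12) (by simp; positivity)
  refine (d1.add d2).congr_deriv ?_
  have hν2 : ν ^ 2 = x ^ 2 - sq4 ν x ^ 4 := by linarith
  rw [om, hν2]
  simp
  field_simp
  ring

lemma om_pos {ν x : ℝ} (hν : 0 < ν) (hx : ν < x) : 0 < om ν x := by
  have hx0 : 0 < x := hν.trans hx
  have hs := sq4_pos hν hx
  unfold om; positivity

lemma Ps_pos {ν x : ℝ} (hν : 0 < ν) (hx : ν < x) : 0 < Ps ν x := by
  have hs := sq4_pos hν hx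
  unfold Ps; positivity

lemma Ps_le {ν x : ℝ} (hν : 0 < ν) (hx : ν < x) : Ps ν x ≤ 7 / 18 / ph ν x := by
  have hs := sq4_pos hν hx
  have hp := ph_pos hν hx
  have h1 := ph_le_Q (x := x) hν
  have h2 := ph_le_Q_cube hν hx
  rw [← sq4_sq hν hx] at h1 h2
  have e1 : 1 / (4 * sq4 ν x ^ 2) ≤ 1 / 4 / ph ν x := by
    rw [div_div]
    apply one_div_le_one_div_of_le (by positivity); linarith
  have e2 : 5 * ν ^ 2 / (12 * sq4 ν x ^ 6) ≤ 5 / 36 / ph ν x := by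
    rw [div_div, div_le_div_iff₀ (by positivity) (by positivity)]
    nlinarith
  unfold Ps
  calc _ ≤ 1 / 4 / ph ν x + 5 / 36 / ph ν x := add_le_add e1 e2
    _ = _ := by ring

lemma u_bound {ν j x : ℝ} (hν : 0 < ν) (hj : ν < j) (h0 : Jf ν j = 0) (hP : Ps ν j ≤ 1)
    (hx : j ≤ x) : |uf ν x| ≤ 2 * |vf ν j| := by
  have hm := mono_of_hasDeriv (D := Ici j) (f := fun x => -((uf ν x ^ 2 + vf ν x ^ 2) *
      Real.exp (Ps ν x)))
    (f' := fun x => Real.exp (Ps ν x) * om ν x * (uf ν x + vf ν x) ^ 2) (convex_Ici j)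
    (fun y hy => by
      have hy : ν < y := lt_of_lt_of_le hj hy
      refine ((((uf_hasDerivAt hν hy).pow 2).add ((vf_hasDerivAt hν hy).pow 2)).mul
        (Ps_hasDerivAt hν hy).exp).neg.congr_deriv ?_
      simp
      ring)
    (fun y hy => by
      have := om_pos hν (lt_of_lt_of_le hj hy)
      positivity)
  have h1 := hm self_mem_Ici hx hx
  have hu : uf ν j = 0 := by rw [uf, h0, mul_zero]
  simp only [hu] at h1
  have hνx : ν < x := lt_of_lt_of_le hj hx
  have e1 : 1 ≤ Real.exp (Ps ν x) := Real.one_le_exp (Ps_pos hν hνx).le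
  have e2 : Real.exp (Ps ν j) ≤ 4 := by
    have := Real.exp_le_exp.mpr hP
    linarith [Real.exp_one_lt_d9]
  have h2 : uf ν x ^ 2 ≤ (2 * |vf ν j|) ^ 2 := by
    rw [mul_pow, sq_abs]
    nlinarith [sq_nonneg (uf ν x), sq_nonneg (vf ν x), sq_nonneg (vf ν j)]
  exact abs_le_of_sq_le_sq h2 (by positivity)

/-- The comparison quantity. -/
noncomputable def Tf (ν x : ℝ) : ℝ :=
  uf ν x * (Real.sin (ph ν x) - Real.cos (ph ν x)) +
    vf ν x * (Real.cos (ph ν x) + Real.sin (ph ν x))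

lemma Tf_hasDerivAt {ν x : ℝ} (hν : 0 < ν) (hx : ν < x) :
    HasDerivAt (Tf ν) (-(om ν x * uf ν x * (Real.cos (ph ν x) + Real.sin (ph ν x)))) x := by
  have hp := ph_hasDerivAt hν hx
  rw [← sq4_sq hν hx] at hp
  refine (((uf_hasDerivAt hν hx).mul (hp.sin.sub hp.cos)).add
    ((vf_hasDerivAt hν hx).mul (hp.cos.add hp.sin))).congr_deriv ?_
  simp
  ring

lemma T_bound {ν j x : ℝ} (hν : 0 < ν) (hj : ν < j) (h0 : Jf ν j = 0) (hP : Ps ν j ≤ 1)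
    (hx : j ≤ x) : |Tf ν j| ≤ |Tf ν x| + 4 * |vf ν j| * Ps ν j := by
  have hb : ∀ y ∈ Ici j, |om ν y * uf ν y * (Real.cos (ph ν y) + Real.sin (ph ν y))| ≤
      4 * |vf ν j| * om ν y := by
    intro y hy
    have h1 := u_bound hν hj h0 hP hy
    have h2 := om_pos hν (lt_of_lt_of_le hj hy)
    have h3 : |Real.cos (ph ν y) + Real.sin (ph ν y)| ≤ 2 := by
      refine (abs_add_le _ _).trans ?_
      linarith [Real.abs_cos_le_one (ph ν y), Real.abs_sin_le_one (ph ν y)]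
    rw [abs_mul, abs_mul, abs_of_pos h2]
    calc _ ≤ om ν y * (2 * |vf ν j|) * 2 := by gcongr
      _ = _ := by ring
  have m1 := mono_of_hasDeriv (convex_Ici j) (fun y hy =>
    (Tf_hasDerivAt hν (lt_of_lt_of_le hj hy)).sub
    ((Ps_hasDerivAt hν (lt_of_lt_of_le hj hy)).const_mul (4 * |vf ν j|))) (by
      intro y hy
      have := (abs_le.mp (hb y hy)).2
      linarith)
  have m2 := mono_of_hasDeriv (convex_Ici j) (fun y hy =>
    ((Tf_hasDerivAt hν (lt_of_lt_of_le hj hy)).add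
    ((Ps_hasDerivAt hν (lt_of_lt_of_le hj hy)).const_mul (4 * |vf ν j|))).neg) (by
      intro y hy
      have := (abs_le.mp (hb y hy)).1
      linarith)
  have a1 := m1 self_mem_Ici hx hx
  have a2 := m2 self_mem_Ici hx hx
  simp only [Pi.sub_apply, Pi.add_apply, Pi.neg_apply] at a1 a2
  have hPx := mul_nonneg (by positivity : 0 ≤ 4 * |vf ν j|) (Ps_pos hν (lt_of_lt_of_le hj hx)).le
  have b := abs_le.mp (le_refl |Tf ν x|)
  rw [abs_le]
  constructor <;> linarith

lemma refined {ν j q : ℝ} (hν : 0 < ν) (hj : ν < j) (h0 : Jf ν j = 0) (hφ : π / 2 < ph ν j)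
    (hq : Tendsto (fun x => √x * Jf ν x - q * Real.cos (ph ν x - π / 4)) atTop (𝓝 0)) :
    |Real.cos (ph ν j) + Real.sin (ph ν j)| ≤ 14 / 9 / ph ν j := by
  have hp := Real.pi_gt_three
  have hP : Ps ν j ≤ 1 := by
    refine (Ps_le hν hj).trans ?_
    rw [div_le_one (by linarith)]; linarith
  have hX : ∀ n : ℕ, ∃ x, ν < x ∧ ph ν x = 3 * π / 4 + n * (2 * π) := fun n =>
    ph_surj hν (by positivity)
  choose X hX1 hX2 using hX
  have hXt : Tendsto X atTop atTop := by
    rw [tendsto_atTop]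
    intro b
    obtain ⟨n0, hn0⟩ := exists_nat_ge (ph ν (max b (ν + 1)))
    filter_upwards [eventually_ge_atTop n0] with n hn
    have hm : ν < max b (ν + 1) := by
      have := le_max_right b (ν + 1); linarith
    refine (le_max_left b (ν + 1)).trans ?_
    rw [← ph_le_iff hν hm (hX1 n), hX2]
    have : (n0 : ℝ) ≤ n := by exact_mod_cast hn
    have h3 : (0:ℝ) ≤ n := by positivity
    nlinarith
  have hT0 : Tendsto (fun n => |Tf ν (X n)|) atTop (𝓝 0) := by
    have h1 := (hq.comp hXt).abs
    have h2 := h1.const_mul 2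
    simp only [abs_zero, mul_zero] at h2
    refine squeeze_zero (fun n => abs_nonneg _) (fun n => ?_) h2
    have hc : Real.cos (ph ν (X n)) = -Real.cos (π / 4) := by
      rw [hX2, Real.cos_add_nat_mul_two_pi, ← Real.cos_pi_sub]; congr 1; ring
    have hs : Real.sin (ph ν (X n)) = Real.sin (π / 4) := by
      rw [hX2, Real.sin_add_nat_mul_two_pi, ← Real.sin_pi_sub]; congr 1; ring
    have hc2 : Real.cos (ph ν (X n) - π / 4) = 0 := by
      rw [hX2, show 3 * π / 4 + n * (2 * π) - π / 4 = π / 2 + n * (2 * π) by ring,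
        Real.cos_add_nat_mul_two_pi, Real.cos_pi_div_two]
    have hx0 : 0 < X n := hν.trans (hX1 n)
    simp only [Function.comp, hc2, mul_zero, sub_zero]
    rw [Tf, hc, hs, Real.cos_pi_div_four, Real.sin_pi_div_four]
    have e : uf ν (X n) * (√2 / 2 - -(√2 / 2)) + vf ν (X n) * (-(√2 / 2) + √2 / 2) =
      √2 * (sq4 ν (X n) * Jf ν (X n)) := by rw [uf]; ring
    rw [e, abs_mul, abs_mul, abs_mul, abs_of_nonneg (Real.sqrt_nonneg 2),
      abs_of_pos (sq4_pos hν (hX1 n)), abs_of_nonneg (Real.sqrt_nonneg (X n))]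
    have h5 : √2 ≤ 2 := by
      rw [Real.sqrt_le_iff]; norm_num
    have h6 : sq4 ν (X n) ≤ √(X n) := by
      apply Real.sqrt_le_sqrt
      rw [Real.sqrt_le_iff]
      exact ⟨hx0.le, by nlinarith⟩
    have := sq4_pos hν (hX1 n)
    gcongr
  have hTj : |Tf ν j| ≤ 0 + 4 * |vf ν j| * Ps ν j := by
    apply ge_of_tendsto (hT0.add_const (4 * |vf ν j| * Ps ν j))
    filter_upwards [hXt.eventually (eventually_ge_atTop j)] with n hn
    exact T_bound hν hj h0 hP hn
  have hu : uf ν j = 0 := by rw [uf, h0, mul_zero]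
  have hv : vf ν j ≠ 0 := by
    rw [vf, h0, mul_zero, zero_add]
    have := sq4_pos hν hj
    have h1 := Jf1_ne hν (hν.trans hj) h0
    have h2 : j ≠ 0 := by linarith
    positivity
  have hv' : 0 < |vf ν j| := abs_pos.mpr hv
  rw [Tf, hu, zero_mul, zero_add, zero_add, abs_mul] at hTj
  have h4 : |Real.cos (ph ν j) + Real.sin (ph ν j)| ≤ 4 * Ps ν j := by
    apply le_of_mul_le_mul_left _ hv'
    linarith
  have h5 := Ps_le hν hj
  calc _ ≤ 4 * (7 / 18 / ph ν j) := by linarith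
    _ = _ := by ring

lemma final_bound {ν j q : ℝ} {k : ℕ} (hν : 0 < ν) (hk : 1 ≤ k) (hj : IsKthZero ν k j)
    (hνj : ν < j)
    (hq : Tendsto (fun x => √x * Jf ν x - q * Real.cos (ph ν x - π / 4)) atTop (𝓝 0)) :
    |j * gfun (ν / j) - ((k : ℝ) - 1 / 4)| ≤ 1 / (k : ℝ) := by
  obtain ⟨h0, h1, h2⟩ := index_eq hν hk hj hνj
  have hp := Real.pi_gt_three
  have hk' : (1:ℝ) ≤ k := by exact_mod_cast hk
  have hφ : (k:ℝ) * π / 2 ≤ ph ν j := by nlinarith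
  have hr := refined hν hνj h0 (by nlinarith) hq
  set δ := ph ν j - ((k:ℝ) - 1/4) * π with hδ
  have hd : |δ| ≤ π / 4 := by rw [abs_le]; constructor <;> linarith
  have hsq : (Real.cos (ph ν j) + Real.sin (ph ν j)) ^ 2 = 2 * Real.sin δ ^ 2 := by
    have e1 : (Real.cos (ph ν j) + Real.sin (ph ν j)) ^ 2 = 1 + Real.sin (2 * ph ν j) := by
      rw [Real.sin_two_mul]
      linarith [Real.sin_sq_add_cos_sq (ph ν j)]
    have e2 : 2 * ph ν j = (2 * δ - π / 2) + k * (2 * π) := by rw [hδ]; ring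
    rw [e1, e2, Real.sin_add_nat_mul_two_pi, Real.sin_sub_pi_div_two, Real.cos_two_mul]
    linarith [Real.sin_sq_add_cos_sq δ]
  have hsin : 2 / π * |δ| ≤ |Real.sin δ| := by
    have h5 := Real.mul_le_sin (abs_nonneg δ) (by linarith)
    have h6 : Real.sin |δ| ≤ |Real.sin δ| := by
      rcases abs_cases δ with ⟨h, -⟩ | ⟨h, -⟩
      · rw [h]; exact le_abs_self _
      · rw [h, Real.sin_neg]; exact neg_le_abs _
    linarith
  have hs2 : |Real.sin δ| ≤ |Real.cos (ph ν j) + Real.sin (ph ν j)| := by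
    apply sq_le_sq.mp
    rw [hsq]; nlinarith [sq_nonneg (Real.sin δ)]
  have hle : 2 / π * |δ| ≤ 14 / 9 / (k * π / 2) := by
    refine hsin.trans (hs2.trans (hr.trans ?_))
    gcongr
  rw [gfun_ph hν hνj]
  have e : ph ν j / π - ((k:ℝ) - 1 / 4) = δ / π := by rw [hδ]; field_simp
  rw [e, abs_div, abs_of_pos Real.pi_pos]
  have h9 : |δ| / π ≤ 14 / 9 / (k * π) := by
    have : |δ| / π = (2 / π * |δ|) / 2 := by ring
    rw [this]
    calc _ ≤ (14 / 9 / (k * π / 2)) / 2 := by gcongr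
      _ = _ := by field_simp
  refine h9.trans ?_
  rw [div_le_div_iff₀ (by positivity) (by positivity)]
  nlinarith


/-! ### Part 6: conclusion -/

/-- normalized Fresnel integral -/
noncomputable def Zf (x : ℝ) : ℂ :=
  ((2 * √2 : ℝ) : ℂ) * (Complex.exp (((-(π / 4) : ℝ) : ℂ) * Complex.I) * Hf x)

lemma Z_rel (ν x : ℝ) :
    2 * √2 * (Complex.exp (((x - ν * π / 2 : ℝ) : ℂ) * Complex.I) * Hf x).re =
      (Complex.exp (((x - ν * π / 2 + π / 4 : ℝ) : ℂ) * Complex.I) * Zf x).re := by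
  rw [← Complex.re_ofReal_mul, Zf]
  congr 1
  have : Complex.exp (((x - ν * π / 2 : ℝ) : ℂ) * Complex.I) =
      Complex.exp (((x - ν * π / 2 + π / 4 : ℝ) : ℂ) * Complex.I) *
      Complex.exp (((-(π / 4) : ℝ) : ℂ) * Complex.I) := by
    rw [← Complex.exp_add]; congr 1; push_cast; ring
  rw [this]
  ring

lemma Z_slow : Tendsto (fun x => Zf (x + π / 2) - Zf x) atTop (𝓝 0) := by
  have h := H_slow.const_mul (((2 * √2 : ℝ) : ℂ) * Complex.exp (((-(π / 4) : ℝ) : ℂ) * Complex.I))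
  rw [mul_zero] at h
  refine h.congr fun x => ?_
  rw [Zf, Zf]
  ring

lemma Z_lim : ∃ q : ℝ, Tendsto (fun x => Zf x + q * Complex.I) atTop (𝓝 0) := by
  obtain ⟨q, hq⟩ := Jf_half
  refine ⟨q, ?_⟩
  have h1 : Tendsto (fun x : ℝ => (Complex.exp ((x : ℂ) * Complex.I) * Zf x).re - q * Real.sin x)
      atTop (𝓝 0) := by
    have h := (Jf_fresnel (ν := 1/2) (by norm_num)).neg
    rw [neg_zero] at h
    refine h.congr' ?_
    filter_upwards [eventually_gt_atTop 0] with x hx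
    rw [hq x hx, Z_rel, show x - 1 / 2 * π / 2 + π / 4 = x by ring]
    ring
  have h2 : Tendsto (fun x : ℝ => (Complex.exp ((x : ℂ) * Complex.I) * Zf x).im + q * Real.cos x)
      atTop (𝓝 0) := by
    have ha := (h1.comp (tendsto_atTop_add_const_right atTop (π / 2) tendsto_id)).neg
    have hb : Tendsto (fun x : ℝ => (Complex.exp ((x : ℂ) * Complex.I) *
        (Zf (x + π / 2) - Zf x)).im) atTop (𝓝 0) := by
      have hn := Z_slow.norm
      rw [norm_zero] at hn
      apply squeeze_zero_norm _ hn
      intro x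
      refine (Complex.abs_im_le_norm _).trans ?_
      rw [norm_mul, Complex.norm_exp_ofReal_mul_I, one_mul]
    have hc := ha.sub hb
    rw [neg_zero, sub_zero] at hc
    refine hc.congr fun x => ?_
    simp only [Function.comp, id]
    have e : Complex.exp (((x + π / 2 : ℝ) : ℂ) * Complex.I) =
        Complex.exp ((x : ℂ) * Complex.I) * Complex.I := by
      push_cast
      rw [add_mul, Complex.exp_add, Complex.exp_pi_div_two_mul_I]
    rw [e, Real.sin_add_pi_div_two, mul_sub, Complex.sub_im,
      show Complex.exp ((x : ℂ) * Complex.I) * Complex.I * Zf (x + π / 2) =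
        Complex.I * (Complex.exp ((x : ℂ) * Complex.I) * Zf (x + π / 2)) by ring, Complex.I_mul_re]
    ring
  have h3 := h1.abs.add h2.abs
  simp only [abs_zero, add_zero] at h3
  apply squeeze_zero_norm _ h3
  intro x
  have e : ‖Zf x + q * Complex.I‖ =
      ‖Complex.exp ((x : ℂ) * Complex.I) * (Zf x + q * Complex.I)‖ := by
    rw [norm_mul, Complex.norm_exp_ofReal_mul_I, one_mul]
  rw [e]
  refine (Complex.norm_le_abs_re_add_abs_im _).trans (le_of_eq ?_)
  have e2 : Complex.exp ((x : ℂ) * Complex.I) * (Zf x + q * Complex.I) =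
      Complex.exp ((x : ℂ) * Complex.I) * Zf x +
      (q : ℂ) * (Complex.I * Complex.exp ((x : ℂ) * Complex.I)) := by ring
  rw [e2, Complex.add_re, Complex.add_im, Complex.re_ofReal_mul, Complex.im_ofReal_mul,
    Complex.I_mul_re, Complex.I_mul_im, Complex.exp_ofReal_mul_I_re, Complex.exp_ofReal_mul_I_im]
  congr 2
  ring

theorem Jf_asymp {ν : ℝ} (hν : 0 < ν) : ∃ q : ℝ,
    Tendsto (fun x => √x * Jf ν x - q * Real.cos (ph ν x - π / 4)) atTop (𝓝 0) := by
  obtain ⟨q, hq⟩ := Z_lim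
  refine ⟨q, ?_⟩
  have h1 := Jf_fresnel hν
  have h2 : Tendsto (fun x : ℝ =>
      (Complex.exp (((x - ν * π / 2 + π / 4 : ℝ) : ℂ) * Complex.I) * (Zf x + q * Complex.I)).re)
      atTop (𝓝 0) := by
    have hn := hq.norm
    rw [norm_zero] at hn
    apply squeeze_zero_norm _ hn
    intro x
    refine (Complex.abs_re_le_norm _).trans ?_
    rw [norm_mul, Complex.norm_exp_ofReal_mul_I, one_mul]
  have h3 : Tendsto (fun x => q * (Real.cos (x - ν * π / 2 - π / 4) - Real.cos (ph ν x - π / 4)))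
      atTop (𝓝 0) := by
    have hn := ((ph_asymp hν).abs).const_mul |q|
    rw [abs_zero, mul_zero] at hn
    apply squeeze_zero_norm _ hn
    intro x
    rw [norm_mul, Real.norm_eq_abs, Real.norm_eq_abs]
    have := Real.abs_cos_sub_cos_le (x - ν * π / 2 - π / 4) (ph ν x - π / 4)
    have e : |x - ν * π / 2 - π / 4 - (ph ν x - π / 4)| = |ph ν x - (x - ν * π / 2)| := by
      rw [abs_sub_comm]; congr 1; ring
    rw [e] at this
    gcongr
  have h4 := (h1.add h2).add h3
  simp only [add_zero] at h4
  refine h4.congr fun x => ?_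
  rw [Z_rel]
  have e : Complex.exp (((x - ν * π / 2 + π / 4 : ℝ) : ℂ) * Complex.I) * (Zf x + q * Complex.I) =
      Complex.exp (((x - ν * π / 2 + π / 4 : ℝ) : ℂ) * Complex.I) * Zf x +
      (q : ℂ) * (Complex.I * Complex.exp (((x - ν * π / 2 + π / 4 : ℝ) : ℂ) * Complex.I)) := by
    ring
  rw [e, Complex.add_re, Complex.re_ofReal_mul, Complex.I_mul_re, Complex.exp_ofReal_mul_I_im]
  have : Real.sin (x - ν * π / 2 + π / 4) = Real.cos (x - ν * π / 2 - π / 4) := by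
    rw [← Real.cos_pi_div_two_sub, ← Real.cos_neg]; congr 1; ring
  rw [this]
  ring

/-- for large `ν`, the zeros with `ν < j < (1+c)ν` satisfy
`j g(ν/j) = k - 1/4 + O(1/k)`. -/
theorem zero_approx_large_nu_near (c : ℝ) (hc : 0 < c) :
    ∃ N C : ℝ, 0 < N ∧ 0 < C ∧ ∀ ν : ℝ, N ≤ ν → ∀ k : ℕ, 1 ≤ k → ∀ j : ℝ,
      IsKthZero ν k j → ν < j → j < (1 + c) * ν →
      |j * gfun (ν / j) - ((k : ℝ) - 1 / 4)| ≤ C / (k : ℝ) := by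
  refine ⟨1, 1, one_pos, one_pos, fun ν hν k hk j hj hνj _ => ?_⟩
  have hν0 : 0 < ν := by linarith
  obtain ⟨q, hq⟩ := Jf_asymp hν0
  exact final_bound hν0 hk hj hνj hq
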